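/- arXiv:2505.22478 — 2 statements merged into one kernel-verified Lean document; each statement's English description precedes it below -/
import Mathlib

section
/- Comparison of weighted frequency-truncated masses at different scales (Lemma 2.5, estimate (2.10)). Let D ≥ 1 and let R₁, R₂ be dyadic with 16 ≤ R₁ ≤ R₂/4. There exists a constant C = C(D) such that for every measurable φ : ℝ → ℂ with ‖⟨x⟩^{-D} φ‖_{L¹(ℝ)} < ∞, one has ‖ √σ_{R₁} · P_{≤R₁} φ ‖_{L²(ℝ)} ≤ C ( ‖ √σ_{R₂} · P_{≤R₂} φ ‖_{L²(ℝ)} + R₁^{-D} ‖⟨x⟩^{-D} φ‖_{L¹(ℝ)} ). -/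
open MeasureTheory Real Set ENNReal

noncomputable section

/-- The Japanese bracket `⟨x⟩ = √(1 + x²)`. -/
def jap (x : ℝ) : ℝ := Real.sqrt (1 + x ^ 2)

/-- The inverse Fourier transform `ǧ(x) = (2π)^{-1/2} ∫ g(ξ) e^{i x ξ} dξ`. -/
def invFourier (g : ℝ → ℝ) (x : ℝ) : ℂ :=
  (Real.sqrt (2 * Real.pi) : ℂ)⁻¹ * ∫ ξ : ℝ, (g ξ : ℂ) * Complex.exp (Complex.I * ((x * ξ : ℝ) : ℂ))

/-- `ρ` is an admissible Littlewood–Paley bump function: smooth, `[0,1]`-valued, equal to `1`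
on `[-1,1]` and vanishing outside of `[-9/8, 9/8]`. -/
def IsLPBump (ρ : ℝ → ℝ) : Prop :=
  ContDiff ℝ (⊤ : ℕ∞) ρ ∧ (∀ ξ, ρ ξ ∈ Set.Icc (0 : ℝ) 1) ∧
    (∀ ξ ∈ Set.Icc (-1 : ℝ) 1, ρ ξ = 1) ∧
    ∀ ξ, ξ ∉ Set.Icc (-(9/8) : ℝ) (9/8) → ρ ξ = 0

/-- The symbol `ρ_{≤N}(ξ) = ρ(ξ/N)`. -/
def rhoLE (ρ : ℝ → ℝ) (N : ℝ) (ξ : ℝ) : ℝ := ρ (ξ / N)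

open scoped Classical in
/-- The symbol `ρ_N`: `ρ_1 = ρ_{≤1}` and `ρ_N = ρ_{≤N} - ρ_{≤N/2}` for dyadic `N ≥ 2`. -/
def rhoD (ρ : ℝ → ℝ) (N : ℝ) (ξ : ℝ) : ℝ :=
  if N = 1 then ρ ξ else ρ (ξ / N) - ρ (2 * ξ / N)

/-- The Littlewood–Paley projection `P_{≤N} φ = ρ̌_{≤N} ∗ φ`. -/
def PLE (ρ : ℝ → ℝ) (N : ℝ) (φ : ℝ → ℂ) (x : ℝ) : ℂ :=
  ∫ y : ℝ, invFourier (rhoLE ρ N) y * φ (x - y)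

/-- The Littlewood–Paley projection `P_N φ = ρ̌_N ∗ φ`. -/
def PD (ρ : ℝ → ℝ) (N : ℝ) (φ : ℝ → ℂ) (x : ℝ) : ℂ :=
  ∫ y : ℝ, invFourier (rhoD ρ N) y * φ (x - y)

/-- The weighted norm `‖⟨x⟩^{-D} φ‖_{L¹(ℝ)}`. -/
def wL1 (D : ℝ) (φ : ℝ → ℂ) : ℝ := ∫ x : ℝ, jap x ^ (-D) * ‖φ x‖

/-- The weight `σ_R(x) = exp(-⟨x/R⟩)`. -/
def sigmaW (R x : ℝ) : ℝ := Real.exp (-jap (x / R))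

/-- The weighted `L²`-norm `‖√σ_R · f‖_{L²(ℝ)}`. -/
def wSigmaL2 (R : ℝ) (f : ℝ → ℂ) : ℝ≥0∞ :=
  eLpNorm (fun x => (Real.sqrt (sigmaW R x) : ℂ) * f x) 2 volume

/-!
For `9 / 8 * R₁ ≤ R₂` the symbols satisfy `ρ_{≤R₁} ρ_{≤R₂} = ρ_{≤R₁}`, so that, up to a factor
`√(2π)`, `P_{≤R₁} φ` is the convolution of `K = ρ̌_{≤R₁}` with `P_{≤R₂} φ`. The part `|y| ≤ 1` of
`K` has bounded `L¹` norm and moves points by at most one, a shift under which `√σ_{R₁}` changes by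
at most a bounded factor; as `σ_{R₁} ≤ σ_{R₂}`, Young's inequality bounds its contribution by the
first term on the right. On `|y| ≥ 1` the kernel is `O(R₁^{-m} ⟨y⟩^{-n})` for all `m` and `n`. For
`n ≥ |D|` and `m = 2n + 1`, Peetre's inequality bounds its contribution by
`R₁^{-(2n+1)} ⟨x⟩^D ‖⟨x⟩^{-D} φ‖_{L¹}`, and `‖√σ_{R₁} ⟨x⟩^D‖_{L²} = O(R₁^{n+1})`, which leaves the
factor `R₁^{-n} ≤ R₁^{-D}`.
-/

open scoped FourierTransform SchwartzMap Convolution NNReal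

section LConvolution

variable {G : Type*} [AddGroup G] [MeasurableSpace G] {μ : Measure G}

theorem mul_lconvolution_le {w w' k m : G → ℝ≥0∞}
    (h : ∀ y z, w (y + z) * k y ≤ m y * w' z) (f : G → ℝ≥0∞) (x : G) :
    w x * (k ⋆ₗ[μ] f) x ≤ (m ⋆ₗ[μ] fun z => w' z * f z) x := by
  refine (lintegral_const_mul_le _ _).trans (lintegral_mono fun y => ?_)
  calc w x * (k y * f (-y + x)) = w (y + (-y + x)) * k y * f (-y + x) := by
        rw [add_neg_cancel_left, mul_assoc]
    _ ≤ m y * w' (-y + x) * f (-y + x) := mul_le_mul_left (h _ _) _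
    _ = m y * (w' (-y + x) * f (-y + x)) := mul_assoc _ _ _

theorem lconvolution_eq_indicator_add_indicator_compl {s : Set G} (hs : MeasurableSet s)
    (k f : G → ℝ≥0∞) (x : G) :
    (k ⋆ₗ[μ] f) x = (s.indicator k ⋆ₗ[μ] f) x + (sᶜ.indicator k ⋆ₗ[μ] f) x := by
  have hmul (t : Set G) (y : G) :
      t.indicator k y * f (-y + x) = t.indicator (fun y => k y * f (-y + x)) y :=
    (indicator_mul_left t k fun y => f (-y + x)).symm
  simp only [lconvolution_def, hmul]
  rw [lintegral_indicator hs, lintegral_indicator hs.compl, lintegral_add_compl _ hs]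

variable [MeasurableAdd₂ G] [MeasurableNeg G] [SFinite μ] [μ.IsAddLeftInvariant]

theorem lintegral_lconvolution {k f : G → ℝ≥0∞} (hk : AEMeasurable k μ) (hf : AEMeasurable f μ) :
    ∫⁻ x, (k ⋆ₗ[μ] f) x ∂μ = (∫⁻ y, k y ∂μ) * ∫⁻ x, f x ∂μ := by
  simp only [lconvolution_def]
  rw [lintegral_lintegral_swap (by fun_prop), ← lintegral_mul_const'' _ hk]
  refine lintegral_congr fun y => ?_
  have hfy : AEMeasurable (fun x => f (-y + x)) μ :=
    hf.comp_quasiMeasurePreserving (measurePreserving_add_left μ (-y)).quasiMeasurePreserving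
  rw [lintegral_const_mul'' _ hfy, lintegral_add_left_eq_self f]

theorem lconvolution_rpow_le {k f : G → ℝ≥0∞} (hk : AEMeasurable k μ) (hf : AEMeasurable f μ)
    {p : ℝ} (hp : 1 ≤ p) (x : G) :
    (k ⋆ₗ[μ] f) x ^ p ≤ (∫⁻ y, k y ∂μ) ^ (p - 1) * (k ⋆ₗ[μ] fun z => f z ^ p) x := by
  have hp0 : 0 < p := one_pos.trans_le hp
  have hp1 : 0 ≤ 1 - p⁻¹ := sub_nonneg.2 (inv_le_one_of_one_le₀ hp)
  have hfactor (a b : ℝ≥0∞) : a ^ (1 - p⁻¹) * (a * b ^ p) ^ p⁻¹ = a * b := by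
    rw [ENNReal.mul_rpow_of_nonneg _ _ (by positivity), ENNReal.rpow_rpow_inv hp0.ne', ← mul_assoc,
      ← ENNReal.rpow_add_of_nonneg _ _ hp1 (by positivity), sub_add_cancel, ENNReal.rpow_one]
  have hHolder := ENNReal.lintegral_mul_norm_pow_le (μ := μ) (f := k)
    (g := fun y => k y * f (-y + x) ^ p) hk (by fun_prop) hp1 (inv_nonneg.2 hp0.le)
    (sub_add_cancel 1 p⁻¹)
  simp only [hfactor] at hHolder
  calc (k ⋆ₗ[μ] f) x ^ p
      ≤ ((∫⁻ y, k y ∂μ) ^ (1 - p⁻¹) * (k ⋆ₗ[μ] fun z => f z ^ p) x ^ p⁻¹) ^ p := by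
        gcongr
        exact hHolder
    _ = _ := by
        rw [ENNReal.mul_rpow_of_nonneg _ _ hp0.le, ENNReal.rpow_inv_rpow hp0.ne',
          ← ENNReal.rpow_mul, sub_mul, one_mul, inv_mul_cancel₀ hp0.ne']

/-- Young's inequality `L¹ ∗ Lᵖ ⊆ Lᵖ`. -/
theorem eLpNorm_lconvolution_le {k f : G → ℝ≥0∞} (hk : AEMeasurable k μ) (hf : AEMeasurable f μ)
    {p : ℝ≥0∞} (hp : 1 ≤ p) (hp' : p ≠ ∞) :
    eLpNorm (k ⋆ₗ[μ] f) p μ ≤ (∫⁻ y, k y ∂μ) * eLpNorm f p μ := by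
  have hp0 : p ≠ 0 := (one_pos.trans_le hp).ne'
  have hr : 1 ≤ p.toReal := by simpa using ENNReal.toReal_mono hp' hp
  have hr0 : 0 < p.toReal := one_pos.trans_le hr
  simp only [eLpNorm_eq_lintegral_rpow_enorm_toReal hp0 hp', enorm_eq_self]
  have hpow : ∫⁻ x, (k ⋆ₗ[μ] f) x ^ p.toReal ∂μ ≤
      (∫⁻ y, k y ∂μ) ^ p.toReal * ∫⁻ x, f x ^ p.toReal ∂μ := by
    calc ∫⁻ x, (k ⋆ₗ[μ] f) x ^ p.toReal ∂μ
        ≤ ∫⁻ x, (∫⁻ y, k y ∂μ) ^ (p.toReal - 1) * (k ⋆ₗ[μ] fun z => f z ^ p.toReal) x ∂μ :=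
          lintegral_mono fun x => lconvolution_rpow_le hk hf hr x
      _ = (∫⁻ y, k y ∂μ) ^ (p.toReal - 1) * ((∫⁻ y, k y ∂μ) * ∫⁻ x, f x ^ p.toReal ∂μ) := by
          have hfp : AEMeasurable (fun z => f z ^ p.toReal) μ := by fun_prop
          rw [lintegral_const_mul'' _ (aemeasurable_lconvolution hk hfp),
            lintegral_lconvolution hk hfp]
      _ = _ := by
          nth_rw 2 [← ENNReal.rpow_one (∫⁻ y, k y ∂μ)]
          rw [← mul_assoc, ← ENNReal.rpow_add_of_nonneg _ _ (sub_nonneg.2 hr) one_pos.le,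
            sub_add_cancel]
  calc _ ≤ ((∫⁻ y, k y ∂μ) ^ p.toReal * ∫⁻ x, f x ^ p.toReal ∂μ) ^ (1 / p.toReal) := by gcongr
    _ = _ := by
        rw [ENNReal.mul_rpow_of_nonneg _ _ (by positivity), one_div,
          ENNReal.rpow_rpow_inv hr0.ne']

end LConvolution

section Convolution

variable {𝕜 G : Type*} [RCLike 𝕜] [AddCommGroup G] [MeasurableSpace G] {μ : Measure G}

theorem enorm_convolution_mul_le (f g : G → 𝕜) (x : G) :
    ‖(f ⋆[ContinuousLinearMap.mul 𝕜 𝕜, μ] g) x‖ₑ ≤ ((‖f ·‖ₑ) ⋆ₗ[μ] (‖g ·‖ₑ)) x := by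
  refine (enorm_integral_le_lintegral_enorm _).trans_eq (lintegral_congr fun y => ?_)
  rw [ContinuousLinearMap.mul_apply', enorm_mul, neg_add_eq_sub]

variable [MeasurableAdd₂ G] [MeasurableNeg G] [SFinite μ] [μ.IsAddLeftInvariant]

theorem convolutionExistsAt_mul_of_lconvolution_ne_top {f g : G → 𝕜}
    (hf : AEStronglyMeasurable f μ) (hg : AEStronglyMeasurable g μ) {x : G}
    (h : ((‖f ·‖ₑ) ⋆ₗ[μ] (‖g ·‖ₑ)) x ≠ ∞) :
    ConvolutionExistsAt f g x (ContinuousLinearMap.mul 𝕜 𝕜) μ := by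
  refine ⟨hf.convolution_integrand_snd _ hg x, ?_⟩
  simpa only [HasFiniteIntegral, ContinuousLinearMap.mul_apply', enorm_mul, lconvolution_def,
    neg_add_eq_sub, lt_top_iff_ne_top] using h

theorem aestronglyMeasurable_convolution_mul {f g : G → 𝕜} (hf : AEStronglyMeasurable f μ)
    (hg : AEStronglyMeasurable g μ) :
    AEStronglyMeasurable (f ⋆[ContinuousLinearMap.mul 𝕜 𝕜, μ] g) μ :=
  (hf.convolution_integrand _ hg).integral_prod_right'

theorem convolution_mul_assoc_of_lconvolution_ne_top {f g k : G → 𝕜} (hf : Integrable f μ)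
    (hg : Integrable g μ) (hk : AEStronglyMeasurable k μ) {x : G}
    (hgk : ∀ y, ((‖g ·‖ₑ) ⋆ₗ[μ] (‖k ·‖ₑ)) y ≠ ∞)
    (hfgk : ((‖f ·‖ₑ) ⋆ₗ[μ] ((‖g ·‖ₑ) ⋆ₗ[μ] (‖k ·‖ₑ))) x ≠ ∞) :
    ((f ⋆[ContinuousLinearMap.mul 𝕜 𝕜, μ] g) ⋆[ContinuousLinearMap.mul 𝕜 𝕜, μ] k) x =
      (f ⋆[ContinuousLinearMap.mul 𝕜 𝕜, μ] (g ⋆[ContinuousLinearMap.mul 𝕜 𝕜, μ] k)) x := by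
  refine convolution_assoc _ _ _ _ (fun a b c => mul_assoc a b c) hf.1 hg.1 hk
    (hf.ae_convolution_exists _ hg) (.of_forall fun y => ?_) ?_
  · exact convolutionExistsAt_mul_of_lconvolution_ne_top hg.1.norm hk.norm (by simpa using hgk y)
  · refine convolutionExistsAt_mul_of_lconvolution_ne_top hf.1.norm
      (aestronglyMeasurable_convolution_mul hg.1.norm hk.norm) (ne_top_of_le_ne_top hfgk ?_)
    refine lintegral_mono fun y => ?_
    gcongr
    · exact (enorm_norm _).le
    · simpa using enorm_convolution_mul_le (μ := μ) (‖g ·‖) (‖k ·‖) (-y + x)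

end Convolution

section JapaneseBracket

theorem one_le_jap (x : ℝ) : 1 ≤ jap x :=
  Real.one_le_sqrt.2 (le_add_of_nonneg_right (sq_nonneg x))

theorem jap_pos (x : ℝ) : 0 < jap x := one_pos.trans_le (one_le_jap x)

theorem continuous_jap : Continuous jap := by
  unfold jap
  fun_prop

theorem jap_sq (x : ℝ) : jap x ^ 2 = 1 + x ^ 2 := Real.sq_sqrt (by positivity)

theorem jap_le_jap {x y : ℝ} (h : |x| ≤ |y|) : jap x ≤ jap y :=
  Real.sqrt_le_sqrt (by gcongr 1 + ?_; exact sq_le_sq.2 h)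

theorem jap_mul_le {a : ℝ} (ha : 1 ≤ a) (x : ℝ) : jap (a * x) ≤ a * jap x := by
  refine Real.sqrt_le_iff.2 ⟨mul_nonneg (by positivity) (jap_pos x).le, ?_⟩
  rw [mul_pow, mul_pow, jap_sq, mul_add, mul_one]
  gcongr
  exact one_le_pow₀ ha

theorem jap_add_le (x y : ℝ) : jap (x + y) ≤ |x| + jap y := by
  have hy : |y| ≤ jap y := Real.abs_le_sqrt (by linarith)
  refine Real.sqrt_le_iff.2 ⟨add_nonneg (abs_nonneg x) (jap_pos y).le, ?_⟩
  calc 1 + (x + y) ^ 2 = x ^ 2 + 2 * (x * y) + (1 + y ^ 2) := by ring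
    _ ≤ |x| ^ 2 + 2 * (|x| * jap y) + jap y ^ 2 := by
        have hxy : x * y ≤ |x| * jap y :=
          (le_abs_self _).trans ((abs_mul x y).trans_le (by gcongr))
        rw [sq_abs, jap_sq]
        gcongr
    _ = (|x| + jap y) ^ 2 := by ring

theorem jap_add_le_mul (x y : ℝ) : jap (x + y) ≤ (1 + |x|) * jap y := by
  nlinarith [jap_add_le x y, one_le_jap y, abs_nonneg x]

/-- Peetre's inequality. -/
theorem jap_add_rpow_le {s : ℝ} {n : ℕ} (hs : |s| ≤ n) (x y : ℝ) :
    jap (x + y) ^ s ≤ (1 + |x|) ^ n * jap y ^ s := by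
  have hjy : jap y ≤ (1 + |x|) * jap (x + y) := by
    simpa using jap_add_le_mul (-x) (x + y)
  have hx : 1 ≤ 1 + |x| := le_add_of_nonneg_right (abs_nonneg x)
  have hpow : (1 + |x|) ^ |s| ≤ (1 + |x|) ^ n := by
    rw [← Real.rpow_natCast]
    exact Real.rpow_le_rpow_of_exponent_le hx hs
  refine le_trans ?_ (mul_le_mul_of_nonneg_right hpow (Real.rpow_nonneg (jap_pos y).le s))
  rcases le_or_gt 0 s with h | h
  · rw [abs_of_nonneg h, ← Real.mul_rpow (by positivity) (jap_pos y).le]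
    exact Real.rpow_le_rpow (jap_pos _).le (jap_add_le_mul x y) h
  · rw [abs_of_neg h, Real.rpow_neg (by positivity), ← Real.inv_rpow (by positivity),
      ← Real.mul_rpow (by positivity) (jap_pos y).le]
    refine Real.rpow_le_rpow_of_nonpos (mul_pos (by positivity) (jap_pos y)) ?_ h.le
    rwa [inv_mul_le_iff₀ (by positivity)]

theorem enorm_one_add_norm_pow {E : Type*} [SeminormedAddCommGroup E] (x : E) (n : ℕ) :
    ‖(1 + ‖x‖) ^ n‖ₑ = (1 + ‖x‖ₑ) ^ n := by
  rw [enorm_pow, Real.enorm_of_nonneg (by positivity),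
    ENNReal.ofReal_add one_pos.le (norm_nonneg x), ENNReal.ofReal_one, ofReal_norm]

theorem enorm_jap_add_rpow_le {s : ℝ} {n : ℕ} (hs : |s| ≤ n) (x y : ℝ) :
    ‖jap (x + y) ^ s‖ₑ ≤ (1 + ‖x‖ₑ) ^ n * ‖jap y ^ s‖ₑ := by
  have hnonneg (z : ℝ) : 0 ≤ jap z ^ s := Real.rpow_nonneg (jap_pos z).le s
  rw [← enorm_one_add_norm_pow, ← enorm_mul, Real.enorm_of_nonneg (hnonneg _),
    Real.enorm_of_nonneg (mul_nonneg (by positivity) (hnonneg _))]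
  exact ENNReal.ofReal_le_ofReal (jap_add_rpow_le hs x y)

theorem memLp_two_inv_jap : MemLp (fun x => (jap x)⁻¹) 2 := by
  have hcont : Continuous fun x => (jap x)⁻¹ := continuous_jap.inv₀ fun x => (jap_pos x).ne'
  rw [memLp_two_iff_integrable_sq hcont.aestronglyMeasurable]
  simpa only [inv_pow, jap_sq] using integrable_inv_one_add_sq

end JapaneseBracket

section SigmaWeight

theorem sqrt_sigmaW (R x : ℝ) : √(sigmaW R x) = Real.exp (-jap (x / R) / 2) := by
  rw [sigmaW, Real.exp_half]

theorem continuous_sqrt_sigmaW (R : ℝ) : Continuous fun x => √(sigmaW R x) := by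
  have := continuous_jap
  unfold sigmaW
  fun_prop

theorem sqrt_sigmaW_mono {R R' : ℝ} (hR : 0 < R) (hRR' : R ≤ R') (x : ℝ) :
    √(sigmaW R x) ≤ √(sigmaW R' x) := by
  rw [sqrt_sigmaW, sqrt_sigmaW]
  gcongr
  refine jap_le_jap ?_
  rw [abs_div, abs_div, abs_of_pos hR, abs_of_pos (hR.trans_le hRR')]
  gcongr

theorem sqrt_sigmaW_add_le (R x y : ℝ) :
    √(sigmaW R (x + y)) ≤ Real.exp (|x / R| / 2) * √(sigmaW R y) := by
  have h : jap (y / R) ≤ |x / R| + jap ((x + y) / R) := by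
    have := jap_add_le (-(x / R)) ((x + y) / R)
    rwa [abs_neg, ← neg_div, ← add_div, neg_add_cancel_left] at this
  rw [sqrt_sigmaW, sqrt_sigmaW, ← Real.exp_add]
  gcongr
  linarith

theorem jap_pow_mul_sqrt_sigmaW_le (n : ℕ) {R : ℝ} (hR : 1 ≤ R) (x : ℝ) :
    jap x ^ n * √(sigmaW R x) ≤ 2 ^ n * n.factorial * R ^ n := by
  set t := jap (x / R)
  have ht : 0 < t := jap_pos _
  have hxt : jap x ≤ R * t := by
    simpa [mul_div_cancel₀ x (one_pos.trans_le hR).ne'] using jap_mul_le hR (x / R)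
  have hexp : t ^ n ≤ 2 ^ n * n.factorial * Real.exp (t / 2) := by
    have := Real.pow_div_factorial_le_exp (t / 2) (half_pos ht).le n
    rwa [div_pow, div_div, div_le_iff₀' (by positivity)] at this
  calc jap x ^ n * √(sigmaW R x) ≤ (R * t) ^ n * Real.exp (-(t / 2)) := by
        rw [sqrt_sigmaW, neg_div]
        gcongr
        exact (jap_pos x).le
    _ ≤ R ^ n * (2 ^ n * n.factorial * Real.exp (t / 2)) * Real.exp (-(t / 2)) := by
        rw [mul_pow]
        gcongr
    _ = 2 ^ n * n.factorial * R ^ n := by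
        rw [← mul_assoc, mul_assoc _ (Real.exp _), ← Real.exp_add, add_neg_cancel, Real.exp_zero]
        ring

theorem enorm_complexOfReal (r : ℝ) : ‖(r : ℂ)‖ₑ = ‖r‖ₑ :=
  congrArg _ (Complex.nnnorm_real r)

theorem wSigmaL2_eq_eLpNorm (R : ℝ) (f : ℝ → ℂ) :
    wSigmaL2 R f = eLpNorm (fun x => ‖√(sigmaW R x)‖ₑ * ‖f x‖ₑ) 2 :=
  eLpNorm_congr_enorm_ae (.of_forall fun x => by
    rw [enorm_mul, enorm_eq_self, enorm_complexOfReal])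

theorem exists_wSigmaL2_jap_rpow_le {s : ℝ} {n : ℕ} (hs : s ≤ n) :
    ∃ B : ℝ≥0, ∀ R : ℝ, 1 ≤ R →
      wSigmaL2 R (fun x => (jap x ^ s : ℝ)) ≤ B * ENNReal.ofReal (R ^ (n + 1)) := by
  let B : ℝ := 2 ^ (n + 1) * (n + 1).factorial
  refine ⟨(ENNReal.ofReal B * eLpNorm (fun x => (jap x)⁻¹) 2).toNNReal, fun R hR => ?_⟩
  have : 0 < R := one_pos.trans_le hR
  rw [ENNReal.coe_toNNReal (ENNReal.mul_ne_top ENNReal.ofReal_ne_top memLp_two_inv_jap.2.ne),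
    mul_right_comm, ← ENNReal.ofReal_mul (by positivity), ← Real.enorm_of_nonneg (by positivity),
    ← eLpNorm_const_smul]
  refine eLpNorm_mono fun x => ?_
  rw [← Complex.ofReal_mul, Complex.norm_real, Pi.smul_apply, smul_eq_mul,
    Real.norm_of_nonneg (mul_nonneg (Real.sqrt_nonneg _) (Real.rpow_nonneg (jap_pos x).le s)),
    Real.norm_of_nonneg (mul_nonneg (by positivity) (inv_nonneg.2 (jap_pos x).le)),
    le_mul_inv_iff₀ (jap_pos x)]
  calc √(sigmaW R x) * jap x ^ s * jap x ≤ √(sigmaW R x) * jap x ^ n * jap x := by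
        gcongr
        · exact (jap_pos x).le
        · exact (Real.rpow_le_rpow_of_exponent_le (one_le_jap x) hs).trans_eq
            (Real.rpow_natCast _ n)
    _ = jap x ^ (n + 1) * √(sigmaW R x) := by ring
    _ ≤ B * R ^ (n + 1) := jap_pow_mul_sqrt_sigmaW_le (n + 1) hR x

end SigmaWeight

section InverseFourier

theorem invFourier_eq_fourierInv (g : ℝ → ℝ) (x : ℝ) :
    invFourier g x = (√(2 * π) : ℂ)⁻¹ * 𝓕⁻ (fun ξ => (g ξ : ℂ)) (x / (2 * π)) := by
  rw [invFourier, Real.fourierInv_eq']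
  congr 1
  refine integral_congr_ae (.of_forall fun ξ => ?_)
  have hphase : 2 * π * inner ℝ ξ (x / (2 * π)) = x * ξ := by
    rw [RCLike.inner_apply, conj_trivial]
    field_simp
  simp only [hphase, smul_eq_mul]
  ring_nf

theorem exists_schwartzMap_eq_invFourier (f : 𝓢(ℝ, ℝ)) : ∃ F : 𝓢(ℝ, ℂ), ⇑F = invFourier f := by
  let dilation := ContinuousLinearEquiv.unitsEquivAut ℝ (Units.mk0 (2 * π)⁻¹ (by positivity))
  refine ⟨(√(2 * π) : ℂ)⁻¹ • SchwartzMap.compCLMOfContinuousLinearEquiv ℂ dilation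
    (𝓕⁻ (SchwartzMap.postcompCLM Complex.ofRealCLM f)), funext fun x => ?_⟩
  simp only [dilation, smul_apply, smul_eq_mul, Function.comp_apply,
    SchwartzMap.compCLMOfContinuousLinearEquiv_apply, ContinuousLinearEquiv.unitsEquivAut_apply,
    SchwartzMap.fourierInv_coe, Units.val_mk0, invFourier_eq_fourierInv, div_eq_mul_inv]
  rfl

theorem invFourier_comp_div (g : ℝ → ℝ) {N : ℝ} (hN : 0 < N) (x : ℝ) :
    invFourier (fun ξ => g (ξ / N)) x = N * invFourier g (N * x) := by
  have h := Measure.integral_comp_div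
    (fun ξ : ℝ => (g ξ : ℂ) * Complex.exp (Complex.I * ((N * x * ξ : ℝ) : ℂ))) N
  rw [abs_of_pos hN, Complex.real_smul] at h
  rw [invFourier, invFourier, mul_left_comm, ← h]
  congr! 6 with ξ
  field_simp

theorem fourierInv_mul (f g : 𝓢(ℝ, ℂ)) :
    𝓕⁻ (SchwartzMap.pairing (ContinuousLinearMap.mul ℂ ℂ) f g) =
      SchwartzMap.convolution (ContinuousLinearMap.mul ℂ ℂ) (𝓕⁻ f) (𝓕⁻ g) := by
  rw [← FourierTransform.fourierInv_fourier_eq (F := 𝓢(ℝ, ℂ)) (SchwartzMap.convolution _ _ _),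
    SchwartzMap.fourier_convolution, FourierTransform.fourier_fourierInv_eq,
    FourierTransform.fourier_fourierInv_eq]

theorem convolution_invFourier (f g : 𝓢(ℝ, ℝ)) (x : ℝ) :
    (invFourier f ⋆[ContinuousLinearMap.mul ℂ ℂ] invFourier g) x =
      √(2 * π) * invFourier (fun ξ => f ξ * g ξ) x := by
  set F := SchwartzMap.postcompCLM Complex.ofRealCLM f
  set G := SchwartzMap.postcompCLM Complex.ofRealCLM g
  have hs : (√(2 * π) : ℂ) * (√(2 * π) : ℂ) = (2 * π : ℝ) := by
    exact_mod_cast Real.mul_self_sqrt (by positivity)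
  have hs0 : (√(2 * π) : ℂ) ≠ 0 := by
    exact_mod_cast (Real.sqrt_pos.2 (by positivity : 0 < 2 * π)).ne'
  have hscale := Measure.integral_comp_div (fun y => 𝓕⁻ F y * 𝓕⁻ G (x / (2 * π) - y)) (2 * π)
  have hmul : 𝓕⁻ (fun ξ => ((f ξ * g ξ : ℝ) : ℂ)) (x / (2 * π)) =
      ∫ y, 𝓕⁻ F y * 𝓕⁻ G (x / (2 * π) - y) := by
    have h := DFunLike.congr_fun (fourierInv_mul F G) (x / (2 * π))
    rw [SchwartzMap.convolution_apply, SchwartzMap.fourierInv_coe] at h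
    rw [← convolution_mul, ← h]
    congr! 2 with ξ
    exact Complex.ofReal_mul _ _
  rw [abs_of_pos (by positivity), Complex.real_smul, ← hs] at hscale
  rw [invFourier_eq_fourierInv, mul_inv_cancel_left₀ hs0, hmul, convolution_mul]
  simp only [invFourier_eq_fourierInv, mul_mul_mul_comm (√(2 * π) : ℂ)⁻¹, integral_const_mul,
    sub_div]
  rw [← mul_inv, inv_mul_eq_iff_eq_mul₀ (mul_ne_zero hs0 hs0)]
  simp only [SchwartzMap.fourierInv_coe] at hscale ⊢
  exact hscale

end InverseFourier

section SchwartzDilation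

variable {F : Type*} [NormedAddCommGroup F] [NormedSpace ℝ F]

theorem exists_one_add_enorm_pow_mul_enorm_le {E : Type*} [NormedAddCommGroup E] [NormedSpace ℝ E]
    (K : 𝓢(E, F)) (n : ℕ) : ∃ A : ℝ≥0, ∀ y, (1 + ‖y‖ₑ) ^ n * ‖K y‖ₑ ≤ A := by
  refine ⟨(2 ^ n * ((Finset.Iic (n, 0)).sup fun m => SchwartzMap.seminorm ℝ m.1 m.2) K).toNNReal,
    fun y => ?_⟩
  have h := SchwartzMap.one_add_le_sup_seminorm_apply (𝕜 := ℝ) (m := (n, 0)) le_rfl le_rfl K y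
  rw [norm_iteratedFDeriv_zero] at h
  rw [← enorm_one_add_norm_pow, ← enorm_norm (K y), ← enorm_mul,
    Real.enorm_of_nonneg (by positivity)]
  exact ENNReal.ofReal_le_ofReal h

theorem lintegral_one_add_enorm_pow_mul_enorm_lt_top (K : 𝓢(ℝ, F)) (n : ℕ) :
    ∫⁻ y, (1 + ‖y‖ₑ) ^ n * ‖K y‖ₑ < ∞ := by
  have hint : Integrable fun y => (1 + ‖y‖) ^ n * ‖K y‖ := by
    refine (((K.integrable.norm).add (K.integrable_pow_mul volume n)).const_mul
      (2 ^ (n - 1))).mono' (by fun_prop) (.of_forall fun y => ?_)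
    rw [Real.norm_of_nonneg (by positivity)]
    calc (1 + ‖y‖) ^ n * ‖K y‖ ≤ 2 ^ (n - 1) * (1 ^ n + ‖y‖ ^ n) * ‖K y‖ := by
          gcongr
          exact add_pow_le one_pos.le (norm_nonneg y) n
      _ = 2 ^ (n - 1) * (‖K y‖ + ‖y‖ ^ n * ‖K y‖) := by ring
  simpa only [HasFiniteIntegral, enorm_mul, enorm_norm, enorm_one_add_norm_pow] using hint.2

theorem lintegral_comp_mul_left {f : ℝ → ℝ≥0∞} (hf : Measurable f) {a : ℝ} (ha : 0 < a) :
    ENNReal.ofReal a * ∫⁻ x, f (a * x) = ∫⁻ x, f x := by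
  conv_rhs => rw [← Real.smul_map_volume_mul_left ha.ne', lintegral_smul_measure,
    lintegral_map hf (by fun_prop), abs_of_pos ha, smul_eq_mul]

theorem enorm_le_enorm_mul {a : ℝ} (ha : 1 ≤ a) (y : ℝ) : ‖y‖ₑ ≤ ‖a * y‖ₑ := by
  rw [enorm_mul, Real.enorm_of_nonneg (one_pos.le.trans ha)]
  exact le_mul_of_one_le_left zero_le (ENNReal.one_le_ofReal.2 ha)

variable (K : 𝓢(ℝ, F)) (n : ℕ)

theorem exists_lintegral_dilation_le :
    ∃ A : ℝ≥0, ∀ N : ℝ, 1 ≤ N → ∫⁻ y, (1 + ‖y‖ₑ) ^ n * ‖N • K (N * y)‖ₑ ≤ A := by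
  refine ⟨(∫⁻ y, (1 + ‖y‖ₑ) ^ n * ‖K y‖ₑ).toNNReal, fun N hN => ?_⟩
  rw [ENNReal.coe_toNNReal (lintegral_one_add_enorm_pow_mul_enorm_lt_top K n).ne]
  calc ∫⁻ y, (1 + ‖y‖ₑ) ^ n * ‖N • K (N * y)‖ₑ
      ≤ ∫⁻ y, ENNReal.ofReal N * ((1 + ‖N * y‖ₑ) ^ n * ‖K (N * y)‖ₑ) := by
        refine lintegral_mono fun y => ?_
        rw [enorm_smul, mul_left_comm, Real.enorm_of_nonneg (one_pos.le.trans hN)]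
        gcongr _ * ((1 + ?_) ^ n * _)
        exact enorm_le_enorm_mul hN y
    _ = ∫⁻ y, (1 + ‖y‖ₑ) ^ n * ‖K y‖ₑ := by
        rw [lintegral_const_mul _ (by fun_prop)]
        exact lintegral_comp_mul_left (f := fun y => (1 + ‖y‖ₑ) ^ n * ‖K y‖ₑ) (by fun_prop)
          (one_pos.trans_le hN)

theorem exists_dilation_le_of_one_le_norm (m : ℕ) :
    ∃ A : ℝ≥0, ∀ N : ℝ, 1 ≤ N → ∀ y : ℝ, 1 ≤ ‖y‖ₑ →
      (1 + ‖y‖ₑ) ^ n * ‖N • K (N * y)‖ₑ ≤ A * ENNReal.ofReal (N ^ m)⁻¹ := by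
  obtain ⟨A, hA⟩ := exists_one_add_enorm_pow_mul_enorm_le K (n + (1 + m))
  refine ⟨A, fun N hN y hy => ?_⟩
  have hN0 : 0 < N := one_pos.trans_le hN
  have hNy : ‖N‖ₑ ≤ 1 + ‖N * y‖ₑ := by
    rw [enorm_mul]
    exact le_add_left (le_mul_of_one_le_right zero_le hy)
  rw [ENNReal.ofReal_inv_of_pos (by positivity), ← div_eq_mul_inv,
    ENNReal.le_div_iff_mul_le (by simp [hN0]) (by simp)]
  calc (1 + ‖y‖ₑ) ^ n * ‖N • K (N * y)‖ₑ * ENNReal.ofReal (N ^ m)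
      = (1 + ‖y‖ₑ) ^ n * ‖N‖ₑ ^ (1 + m) * ‖K (N * y)‖ₑ := by
        rw [enorm_smul, ENNReal.ofReal_pow hN0.le, ← Real.enorm_of_nonneg hN0.le]
        ring
    _ ≤ (1 + ‖N * y‖ₑ) ^ n * (1 + ‖N * y‖ₑ) ^ (1 + m) * ‖K (N * y)‖ₑ := by
        gcongr
        exact enorm_le_enorm_mul hN y
    _ ≤ A := by
        rw [← pow_add]
        exact hA _

end SchwartzDilation

section JapWeightedConvolution

theorem lconvolution_le_mul_lintegral {G : Type*} [AddCommGroup G] [MeasurableSpace G]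
    [MeasurableAdd G] [MeasurableNeg G] {μ : Measure G} [μ.IsNegInvariant] [μ.IsAddLeftInvariant]
    {k : G → ℝ≥0∞} {c : ℝ≥0∞} (hk : ∀ y, k y ≤ c) (hc : c ≠ ∞) (f : G → ℝ≥0∞) (x : G) :
    (k ⋆ₗ[μ] f) x ≤ c * ∫⁻ y, f y ∂μ := by
  calc (k ⋆ₗ[μ] f) x ≤ ∫⁻ y, c * f (-y + x) ∂μ := lintegral_mono fun y => by gcongr; exact hk y
    _ = c * ∫⁻ y, f y ∂μ := by
        simp only [neg_add_eq_sub]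
        rw [lintegral_const_mul' _ _ hc, lintegral_sub_left_eq_self]

variable {s : ℝ} {n : ℕ}

theorem enorm_jap_rpow_mul_lconvolution_le (hs : |s| ≤ n) (k f : ℝ → ℝ≥0∞) (x : ℝ) :
    ‖jap x ^ s‖ₑ * (k ⋆ₗ f) x ≤
      ((fun y => (1 + ‖y‖ₑ) ^ n * k y) ⋆ₗ fun z => ‖jap z ^ s‖ₑ * f z) x :=
  mul_lconvolution_le (w := fun x => ‖jap x ^ s‖ₑ)
    (fun y z => (mul_le_mul_left (enorm_jap_add_rpow_le hs y z) (k y)).trans_eq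
      (mul_right_comm _ _ _)) f x

theorem lconvolution_le_enorm_jap_rpow_neg (hs : |s| ≤ n) {k : ℝ → ℝ≥0∞} {c : ℝ≥0∞} (hc : c ≠ ∞)
    (hk : ∀ y, (1 + ‖y‖ₑ) ^ n * k y ≤ c) (f : ℝ → ℝ≥0∞) (x : ℝ) :
    (k ⋆ₗ f) x ≤ c * (∫⁻ z, ‖jap z ^ s‖ₑ * f z) * ‖jap x ^ (-s)‖ₑ := by
  have hinv : ‖jap x ^ s‖ₑ * ‖jap x ^ (-s)‖ₑ = 1 := by
    rw [← enorm_mul, ← Real.rpow_add (jap_pos x), add_neg_cancel, Real.rpow_zero, enorm_one]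
  calc (k ⋆ₗ f) x = ‖jap x ^ s‖ₑ * (k ⋆ₗ f) x * ‖jap x ^ (-s)‖ₑ := by
        rw [mul_right_comm, hinv, one_mul]
    _ ≤ _ := mul_le_mul_left ((enorm_jap_rpow_mul_lconvolution_le hs k f x).trans
        (lconvolution_le_mul_lintegral hk hc _ x)) _

theorem lintegral_enorm_jap_rpow_mul_lconvolution_le (hs : |s| ≤ n) {k f : ℝ → ℝ≥0∞}
    (hk : AEMeasurable k) (hf : AEMeasurable f) :
    ∫⁻ x, ‖jap x ^ s‖ₑ * (k ⋆ₗ f) x ≤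
      (∫⁻ y, (1 + ‖y‖ₑ) ^ n * k y) * ∫⁻ x, ‖jap x ^ s‖ₑ * f x := by
  have := continuous_jap.measurable
  refine (lintegral_mono fun x => enorm_jap_rpow_mul_lconvolution_le hs k f x).trans_eq ?_
  exact lintegral_lconvolution (by fun_prop) (by fun_prop)

theorem lconvolution_schwartzMap_ne_top {F : Type*} [NormedAddCommGroup F] [NormedSpace ℝ F]
    (K : 𝓢(ℝ, F)) {f : ℝ → ℝ≥0∞} (hf : ∫⁻ x, ‖jap x ^ s‖ₑ * f x ≠ ∞) (x : ℝ) :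
    ((‖K ·‖ₑ) ⋆ₗ f) x ≠ ∞ := by
  obtain ⟨n, hn⟩ := exists_nat_ge |s|
  obtain ⟨A, hA⟩ := exists_one_add_enorm_pow_mul_enorm_le K n
  refine ne_top_of_le_ne_top ?_ (lconvolution_le_enorm_jap_rpow_neg hn ENNReal.coe_ne_top hA f x)
  exact ENNReal.mul_ne_top (ENNReal.mul_ne_top ENNReal.coe_ne_top hf) enorm_ne_top

theorem convolution_schwartzMap_assoc (K K' : 𝓢(ℝ, ℂ)) {φ : ℝ → ℂ} (hφ : AEStronglyMeasurable φ)
    (hφs : ∫⁻ x, ‖jap x ^ s‖ₑ * ‖φ x‖ₑ ≠ ∞) (x : ℝ) :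
    ((K ⋆[ContinuousLinearMap.mul ℂ ℂ] K') ⋆[ContinuousLinearMap.mul ℂ ℂ] φ) x =
      (K ⋆[ContinuousLinearMap.mul ℂ ℂ] (K' ⋆[ContinuousLinearMap.mul ℂ ℂ] φ)) x := by
  obtain ⟨n, hn⟩ := exists_nat_ge |s|
  refine convolution_mul_assoc_of_lconvolution_ne_top K.integrable K'.integrable hφ
    (lconvolution_schwartzMap_ne_top K' hφs) (lconvolution_schwartzMap_ne_top K (s := s) ?_ x)
  exact ne_top_of_le_ne_top
    (ENNReal.mul_ne_top (lintegral_one_add_enorm_pow_mul_enorm_lt_top K' n).ne hφs)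
    (lintegral_enorm_jap_rpow_mul_lconvolution_le hn (by fun_prop) hφ.enorm)

end JapWeightedConvolution

section Localization

variable {R R' : ℝ}

theorem eLpNorm_sqrt_sigmaW_mul_lconvolution_le {k f : ℝ → ℝ≥0∞} (hk : AEMeasurable k)
    (hf : AEMeasurable f) (hk1 : ∀ y, 1 < ‖y‖ₑ → k y = 0) (hR : 1 ≤ R) (hRR' : R ≤ R') :
    eLpNorm (fun x => ‖√(sigmaW R x)‖ₑ * (k ⋆ₗ f) x) 2 ≤
      ENNReal.ofReal (Real.exp (1 / 2)) * (∫⁻ y, k y) *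
        eLpNorm (fun x => ‖√(sigmaW R' x)‖ₑ * f x) 2 := by
  have hR0 : 0 < R := one_pos.trans_le hR
  have hσ := (continuous_sqrt_sigmaW R').enorm.measurable
  have hslow (y z : ℝ) : ‖√(sigmaW R (y + z))‖ₑ * k y ≤
      ENNReal.ofReal (Real.exp (1 / 2)) * k y * ‖√(sigmaW R' z)‖ₑ := by
    rcases lt_or_ge 1 ‖y‖ₑ with hy | hy
    · simp [hk1 y hy]
    have hy1 : |y| ≤ 1 := by rwa [← ofReal_norm, ENNReal.ofReal_le_one] at hy
    rw [mul_right_comm, Real.enorm_of_nonneg (Real.sqrt_nonneg _),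
      Real.enorm_of_nonneg (Real.sqrt_nonneg _), ← ENNReal.ofReal_mul (Real.exp_pos _).le]
    gcongr
    calc √(sigmaW R (y + z)) ≤ Real.exp (|y / R| / 2) * √(sigmaW R z) := sqrt_sigmaW_add_le R y z
      _ ≤ Real.exp (1 / 2) * √(sigmaW R' z) := by
          refine mul_le_mul ?_ (sqrt_sigmaW_mono hR0 hRR' z) (Real.sqrt_nonneg _)
            (Real.exp_pos _).le
          gcongr
          rw [abs_div, abs_of_pos hR0]
          exact (div_le_one hR0).2 (hy1.trans hR)
  refine (eLpNorm_mono_enorm (g := (fun y => ENNReal.ofReal (Real.exp (1 / 2)) * k y) ⋆ₗ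
    fun z => ‖√(sigmaW R' z)‖ₑ * f z) ?_).trans ?_
  · simpa only [enorm_eq_self] using mul_lconvolution_le (w := fun x => ‖√(sigmaW R x)‖ₑ) hslow f
  · rw [← lintegral_const_mul'' _ hk]
    exact eLpNorm_lconvolution_le (hk.const_mul _) (hσ.aemeasurable.mul hf) one_le_two
      ENNReal.ofNat_ne_top

variable {s : ℝ} {n : ℕ} {c : ℝ≥0∞}

theorem eLpNorm_sqrt_sigmaW_mul_lconvolution_le_of_decay (hs : |s| ≤ n) (hc : c ≠ ∞)
    {k : ℝ → ℝ≥0∞} (hk : ∀ y, (1 + ‖y‖ₑ) ^ n * k y ≤ c) (f : ℝ → ℝ≥0∞) :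
    eLpNorm (fun x => ‖√(sigmaW R x)‖ₑ * (k ⋆ₗ f) x) 2 ≤
      c * (∫⁻ x, ‖jap x ^ s‖ₑ * f x) * wSigmaL2 R (fun x => (jap x ^ (-s) : ℝ)) := by
  have hσ := (continuous_sqrt_sigmaW R).measurable
  have hjap := continuous_jap.measurable
  refine eLpNorm_le_mul_eLpNorm_of_ae_le_mul'' 2
    (Measurable.aestronglyMeasurable (by fun_prop)) (.of_forall fun x => ?_)
  rw [enorm_eq_self, enorm_mul, enorm_complexOfReal, enorm_complexOfReal, mul_left_comm]
  gcongr
  exact lconvolution_le_enorm_jap_rpow_neg hs hc hk f x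

theorem wSigmaL2_convolution_le {K u : ℝ → ℂ} (hK : AEStronglyMeasurable K)
    (hu : AEStronglyMeasurable u) (hR : 1 ≤ R) (hRR' : R ≤ R') (hs : |s| ≤ n) (hc : c ≠ ∞)
    (hKc : ∀ y, 1 ≤ ‖y‖ₑ → (1 + ‖y‖ₑ) ^ n * ‖K y‖ₑ ≤ c) :
    wSigmaL2 R (K ⋆[ContinuousLinearMap.mul ℂ ℂ] u) ≤
      ENNReal.ofReal (Real.exp (1 / 2)) * (∫⁻ y, ‖K y‖ₑ) * wSigmaL2 R' u +
        c * (∫⁻ x, ‖jap x ^ s‖ₑ * ‖u x‖ₑ) * wSigmaL2 R (fun x => (jap x ^ (-s) : ℝ)) := by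
  let B : Set ℝ := {y | ‖y‖ₑ ≤ 1}
  let near : ℝ → ℝ≥0∞ := B.indicator (‖K ·‖ₑ)
  let far : ℝ → ℝ≥0∞ := Bᶜ.indicator (‖K ·‖ₑ)
  have hB : MeasurableSet B := measurableSet_le measurable_enorm measurable_const
  have hnear : AEMeasurable near := hK.enorm.indicator hB
  have hfar : AEMeasurable far := hK.enorm.indicator hB.compl
  have hσ := (continuous_sqrt_sigmaW R).enorm.measurable.aemeasurable (μ := volume)
  have hfarc (y : ℝ) : (1 + ‖y‖ₑ) ^ n * far y ≤ c := by
    by_cases hy : y ∈ B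
    · simp [far, hy]
    · simpa [far, hy] using hKc y (not_le.1 hy).le
  rw [wSigmaL2_eq_eLpNorm, wSigmaL2_eq_eLpNorm R' u]
  refine (eLpNorm_mono_enorm (g := (fun x => ‖√(sigmaW R x)‖ₑ * (near ⋆ₗ (‖u ·‖ₑ)) x) +
    fun x => ‖√(sigmaW R x)‖ₑ * (far ⋆ₗ (‖u ·‖ₑ)) x) fun x => ?_).trans
      ((eLpNorm_add_le ?_ ?_ one_le_two).trans (add_le_add ?_ ?_))
  · rw [enorm_eq_self, enorm_eq_self, Pi.add_apply, ← mul_add,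
      ← lconvolution_eq_indicator_add_indicator_compl hB]
    gcongr
    exact enorm_convolution_mul_le K u x
  · exact (hσ.mul (aemeasurable_lconvolution hnear hu.enorm)).aestronglyMeasurable
  · exact (hσ.mul (aemeasurable_lconvolution hfar hu.enorm)).aestronglyMeasurable
  · refine (eLpNorm_sqrt_sigmaW_mul_lconvolution_le hnear hu.enorm
      (fun y hy => indicator_of_notMem (s := B) hy.not_ge _) hR hRR').trans ?_
    gcongr
    exact indicator_le_self _ _ _
  · exact eLpNorm_sqrt_sigmaW_mul_lconvolution_le_of_decay hs hc hfarc _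

end Localization

theorem inv_pow_mul_pow_le_rpow {R s : ℝ} (hR : 1 ≤ R) {n : ℕ} (hs : -s ≤ n) (m : ℕ) :
    (R ^ (n + m))⁻¹ * R ^ m ≤ R ^ s := by
  have hR0 : 0 < R := one_pos.trans_le hR
  rw [pow_add, mul_inv, inv_mul_cancel_right₀ (by positivity), ← Real.rpow_natCast,
    ← Real.rpow_neg hR0.le]
  exact Real.rpow_le_rpow_of_exponent_le hR (neg_le.1 hs)

namespace IsLPBump

variable {ρ : ℝ → ℝ}

theorem exists_schwartzMap_eq_rhoLE (hρ : IsLPBump ρ) {N : ℝ} (hN : 0 < N) :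
    ∃ f : 𝓢(ℝ, ℝ), ⇑f = rhoLE ρ N := by
  have hsupp : HasCompactSupport ρ := .intro isCompact_Icc hρ.2.2.2
  have hdilation : HasCompactSupport (rhoLE ρ N) :=
    hsupp.comp_homeomorph (Homeomorph.mulRight₀ N⁻¹ (inv_ne_zero hN.ne'))
  exact ⟨hdilation.toSchwartzMap (hρ.1.comp (contDiff_id.div_const N)), rfl⟩

theorem rhoLE_mul_rhoLE (hρ : IsLPBump ρ) {N N' : ℝ} (hN : 0 < N) (hNN' : 9 / 8 * N ≤ N') (ξ : ℝ) :
    rhoLE ρ N ξ * rhoLE ρ N' ξ = rhoLE ρ N ξ := by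
  by_cases hξ : |ξ / N| ≤ 9 / 8
  · have hξ' : |ξ / N'| ≤ 1 := by
      have hN' : 0 < N' := by linarith
      rw [abs_div, abs_of_pos hN, div_le_iff₀ hN] at hξ
      rw [abs_div, abs_of_pos hN', div_le_one hN']
      exact hξ.trans hNN'
    rw [rhoLE, rhoLE, hρ.2.2.1 _ (abs_le.1 hξ'), mul_one]
  · rw [rhoLE, hρ.2.2.2 _ fun h => hξ (abs_le.2 h), zero_mul]

theorem exists_schwartzMap_invFourier_rhoLE (hρ : IsLPBump ρ) :
    ∃ K : 𝓢(ℝ, ℂ), ∀ N : ℝ, 0 < N → invFourier (rhoLE ρ N) = fun y => N • K (N * y) := by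
  obtain ⟨f, hf⟩ := hρ.exists_schwartzMap_eq_rhoLE one_pos
  obtain ⟨K, hK⟩ := exists_schwartzMap_eq_invFourier f
  refine ⟨K, fun N hN => funext fun y => ?_⟩
  have hρ1 : rhoLE ρ 1 = ρ := funext fun ξ => by rw [rhoLE, div_one]
  rw [hK, hf, hρ1, Complex.real_smul]
  exact invFourier_comp_div ρ hN y

theorem exists_lintegral_invFourier_rhoLE_le (hρ : IsLPBump ρ) (n : ℕ) : ∃ A : ℝ≥0, ∀ N : ℝ, 1 ≤ N →
    ∫⁻ y, (1 + ‖y‖ₑ) ^ n * ‖invFourier (rhoLE ρ N) y‖ₑ ≤ A := by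
  obtain ⟨K, hK⟩ := hρ.exists_schwartzMap_invFourier_rhoLE
  obtain ⟨A, hA⟩ := exists_lintegral_dilation_le K n
  refine ⟨A, fun N hN => ?_⟩
  rw [hK N (one_pos.trans_le hN)]
  exact hA N hN

theorem exists_invFourier_rhoLE_le_of_one_le_norm (hρ : IsLPBump ρ) (n m : ℕ) :
    ∃ A : ℝ≥0, ∀ N : ℝ, 1 ≤ N → ∀ y : ℝ, 1 ≤ ‖y‖ₑ →
      (1 + ‖y‖ₑ) ^ n * ‖invFourier (rhoLE ρ N) y‖ₑ ≤ A * ENNReal.ofReal (N ^ m)⁻¹ := by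
  obtain ⟨K, hK⟩ := hρ.exists_schwartzMap_invFourier_rhoLE
  obtain ⟨A, hA⟩ := exists_dilation_le_of_one_le_norm K n m
  refine ⟨A, fun N hN => ?_⟩
  rw [hK N (one_pos.trans_le hN)]
  exact hA N hN

theorem continuous_invFourier_rhoLE (hρ : IsLPBump ρ) {N : ℝ} (hN : 0 < N) :
    Continuous (invFourier (rhoLE ρ N)) := by
  obtain ⟨K, hK⟩ := hρ.exists_schwartzMap_invFourier_rhoLE
  rw [hK N hN]
  fun_prop

variable {φ : ℝ → ℂ}

theorem aestronglyMeasurable_PLE (hρ : IsLPBump ρ) {N : ℝ} (hN : 0 < N)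
    (hφ : AEStronglyMeasurable φ) : AEStronglyMeasurable (PLE ρ N φ) :=
  aestronglyMeasurable_convolution_mul (hρ.continuous_invFourier_rhoLE hN).aestronglyMeasurable hφ

theorem convolution_PLE (hρ : IsLPBump ρ) {N N' : ℝ} (hN : 0 < N) (hNN' : 9 / 8 * N ≤ N')
    (hφ : AEStronglyMeasurable φ) {s : ℝ} (hφs : ∫⁻ x, ‖jap x ^ s‖ₑ * ‖φ x‖ₑ ≠ ∞) (x : ℝ) :
    (invFourier (rhoLE ρ N) ⋆[ContinuousLinearMap.mul ℂ ℂ] PLE ρ N' φ) x =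
      √(2 * π) * PLE ρ N φ x := by
  obtain ⟨f, hf⟩ := hρ.exists_schwartzMap_eq_rhoLE hN
  obtain ⟨f', hf'⟩ := hρ.exists_schwartzMap_eq_rhoLE (N := N') (by linarith)
  obtain ⟨K, hK⟩ := exists_schwartzMap_eq_invFourier f
  obtain ⟨K', hK'⟩ := exists_schwartzMap_eq_invFourier f'
  have hKK' : (K ⋆[ContinuousLinearMap.mul ℂ ℂ] K') =
      fun y => (√(2 * π) : ℂ) * invFourier (rhoLE ρ N) y := by
    funext y
    rw [hK, hK', convolution_invFourier, hf, hf']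
    simp only [hρ.rhoLE_mul_rhoLE hN hNN']
  rw [hf] at hK
  rw [hf'] at hK'
  calc (invFourier (rhoLE ρ N) ⋆[ContinuousLinearMap.mul ℂ ℂ] PLE ρ N' φ) x
      = (K ⋆[ContinuousLinearMap.mul ℂ ℂ] (K' ⋆[ContinuousLinearMap.mul ℂ ℂ] φ)) x := by
        rw [hK, hK']; rfl
    _ = ((K ⋆[ContinuousLinearMap.mul ℂ ℂ] K') ⋆[ContinuousLinearMap.mul ℂ ℂ] φ) x :=
        (convolution_schwartzMap_assoc K K' hφ hφs x).symm
    _ = √(2 * π) * PLE ρ N φ x := by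
        rw [hKK', PLE, ← integral_const_mul, convolution_mul]
        simp only [mul_assoc]

theorem exists_lintegral_enorm_jap_rpow_mul_PLE_le (hρ : IsLPBump ρ) (s : ℝ) :
    ∃ A : ℝ≥0, ∀ N : ℝ, 1 ≤ N → ∀ φ : ℝ → ℂ, AEStronglyMeasurable φ →
      ∫⁻ x, ‖jap x ^ s‖ₑ * ‖PLE ρ N φ x‖ₑ ≤ A * ∫⁻ x, ‖jap x ^ s‖ₑ * ‖φ x‖ₑ := by
  obtain ⟨n, hn⟩ := exists_nat_ge |s|
  obtain ⟨A, hA⟩ := hρ.exists_lintegral_invFourier_rhoLE_le n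
  refine ⟨A, fun N hN φ hφ => ?_⟩
  have hK := (hρ.continuous_invFourier_rhoLE (one_pos.trans_le hN)).enorm.measurable.aemeasurable
    (μ := volume)
  calc ∫⁻ x, ‖jap x ^ s‖ₑ * ‖PLE ρ N φ x‖ₑ
      ≤ ∫⁻ x, ‖jap x ^ s‖ₑ * ((‖invFourier (rhoLE ρ N) ·‖ₑ) ⋆ₗ (‖φ ·‖ₑ)) x := by
        gcongr with x
        exact enorm_convolution_mul_le (invFourier (rhoLE ρ N)) φ x
    _ ≤ (∫⁻ y, (1 + ‖y‖ₑ) ^ n * ‖invFourier (rhoLE ρ N) y‖ₑ) * ∫⁻ x, ‖jap x ^ s‖ₑ * ‖φ x‖ₑ :=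
        lintegral_enorm_jap_rpow_mul_lconvolution_le hn hK hφ.enorm
    _ ≤ A * ∫⁻ x, ‖jap x ^ s‖ₑ * ‖φ x‖ₑ := by
        gcongr
        exact hA N hN

theorem wSigmaL2_PLE_le_wSigmaL2_convolution (hρ : IsLPBump ρ) {N N' : ℝ} (hN : 0 < N)
    (hNN' : 9 / 8 * N ≤ N') (hφ : AEStronglyMeasurable φ) {s : ℝ}
    (hφs : ∫⁻ x, ‖jap x ^ s‖ₑ * ‖φ x‖ₑ ≠ ∞) (R : ℝ) :
    wSigmaL2 R (PLE ρ N φ) ≤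
      wSigmaL2 R (invFourier (rhoLE ρ N) ⋆[ContinuousLinearMap.mul ℂ ℂ] PLE ρ N' φ) := by
  have hpi : 1 ≤ ‖√(2 * π)‖ := by
    rw [Real.norm_of_nonneg (Real.sqrt_nonneg _), Real.one_le_sqrt]
    linarith [Real.two_le_pi]
  refine eLpNorm_mono fun x => ?_
  rw [norm_mul, norm_mul, hρ.convolution_PLE hN hNN' hφ hφs, norm_mul, Complex.norm_real √(2 * π)]
  gcongr
  exact le_mul_of_one_le_left (norm_nonneg _) hpi

theorem exists_wSigmaL2_convolution_invFourier_rhoLE_le (hρ : IsLPBump ρ) (s : ℝ) :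
    ∃ A : ℝ≥0, ∀ R R' : ℝ, 1 ≤ R → R ≤ R' → ∀ u : ℝ → ℂ, AEStronglyMeasurable u →
      wSigmaL2 R (invFourier (rhoLE ρ R) ⋆[ContinuousLinearMap.mul ℂ ℂ] u) ≤
        A * (wSigmaL2 R' u + ENNReal.ofReal (R ^ s) * ∫⁻ x, ‖jap x ^ s‖ₑ * ‖u x‖ₑ) := by
  obtain ⟨n, hn⟩ := exists_nat_ge |s|
  have hsn : -s ≤ n := (neg_le_abs s).trans hn
  obtain ⟨A, hA⟩ := hρ.exists_lintegral_invFourier_rhoLE_le 0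
  obtain ⟨A', hA'⟩ := hρ.exists_invFourier_rhoLE_le_of_one_le_norm n (n + (n + 1))
  obtain ⟨B, hB⟩ := exists_wSigmaL2_jap_rpow_le hsn
  refine ⟨(Real.exp (1 / 2)).toNNReal * A + A' * B, fun R R' hR hRR' u hu => ?_⟩
  have hK := (hρ.continuous_invFourier_rhoLE (one_pos.trans_le hR)).aestronglyMeasurable
    (μ := volume)
  set I := ∫⁻ x, ‖jap x ^ s‖ₑ * ‖u x‖ₑ
  calc wSigmaL2 R (invFourier (rhoLE ρ R) ⋆[ContinuousLinearMap.mul ℂ ℂ] u)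
      ≤ ENNReal.ofReal (Real.exp (1 / 2)) * (∫⁻ y, ‖invFourier (rhoLE ρ R) y‖ₑ) * wSigmaL2 R' u +
          A' * ENNReal.ofReal (R ^ (n + (n + 1)))⁻¹ * I *
            wSigmaL2 R (fun x => (jap x ^ (-s) : ℝ)) :=
        wSigmaL2_convolution_le hK hu hR hRR' hn (by finiteness) (hA' R hR)
    _ ≤ ENNReal.ofReal (Real.exp (1 / 2)) * A * wSigmaL2 R' u +
          A' * ENNReal.ofReal (R ^ (n + (n + 1)))⁻¹ * I *
            (B * ENNReal.ofReal (R ^ (n + 1))) := by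
        gcongr
        · simpa using hA R hR
        · exact hB R hR
    _ = ENNReal.ofReal (Real.exp (1 / 2)) * A * wSigmaL2 R' u +
          A' * B * (ENNReal.ofReal ((R ^ (n + (n + 1)))⁻¹ * R ^ (n + 1)) * I) := by
        rw [ENNReal.ofReal_mul (by positivity)]
        ring
    _ ≤ ((Real.exp (1 / 2)).toNNReal * A + A' * B : ℝ≥0) * wSigmaL2 R' u +
          ((Real.exp (1 / 2)).toNNReal * A + A' * B : ℝ≥0) * (ENNReal.ofReal (R ^ s) * I) := by
        push_cast
        gcongr
        · exact le_self_add
        · exact le_add_self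
        · exact inv_pow_mul_pow_le_rpow hR hsn _
    _ = _ := (mul_add ..).symm

end IsLPBump

theorem ofReal_wL1 {D : ℝ} {φ : ℝ → ℂ} (hφ : Integrable (fun x => jap x ^ (-D) * ‖φ x‖)) :
    ENNReal.ofReal (wL1 D φ) = ∫⁻ x, ‖jap x ^ (-D)‖ₑ * ‖φ x‖ₑ := by
  rw [wL1, ofReal_integral_eq_lintegral_ofReal hφ (.of_forall fun x =>
    mul_nonneg (Real.rpow_nonneg (jap_pos x).le _) (norm_nonneg _))]
  refine lintegral_congr fun x => ?_
  rw [ENNReal.ofReal_mul (Real.rpow_nonneg (jap_pos x).le _), ofReal_norm,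
    Real.enorm_of_nonneg (Real.rpow_nonneg (jap_pos x).le _)]

theorem PLE_weighted_L2_scales_general (ρ : ℝ → ℝ) (hρ : IsLPBump ρ) (D : ℝ) :
    ∃ C : ℝ, 0 < C ∧
      ∀ R₁ R₂ : ℝ, 1 ≤ R₁ → 9 / 8 * R₁ ≤ R₂ →
        ∀ φ : ℝ → ℂ, AEStronglyMeasurable φ → Integrable (fun x => jap x ^ (-D) * ‖φ x‖) →
          wSigmaL2 R₁ (PLE ρ R₁ φ) ≤
            ENNReal.ofReal C *
              (wSigmaL2 R₂ (PLE ρ R₂ φ) +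
                ENNReal.ofReal (R₁ ^ (-D)) * ENNReal.ofReal (wL1 D φ)) := by
  obtain ⟨A, hA⟩ := hρ.exists_wSigmaL2_convolution_invFourier_rhoLE_le (-D)
  obtain ⟨A', hA'⟩ := hρ.exists_lintegral_enorm_jap_rpow_mul_PLE_le (-D)
  refine ⟨(A + 1 : ℝ≥0) * (A' + 1 : ℝ≥0), by positivity, fun R₁ R₂ hR₁ hR₁₂ φ hφ hφD => ?_⟩
  have hR₁0 : 0 < R₁ := one_pos.trans_le hR₁
  have hR₂ : R₁ ≤ R₂ := by linarith
  have hI : ∫⁻ x, ‖jap x ^ (-D)‖ₑ * ‖φ x‖ₑ ≠ ∞ := ofReal_wL1 hφD ▸ ENNReal.ofReal_ne_top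
  rw [ofReal_wL1 hφD, ENNReal.ofReal_mul NNReal.zero_le_coe, ENNReal.ofReal_coe_nnreal,
    ENNReal.ofReal_coe_nnreal]
  calc wSigmaL2 R₁ (PLE ρ R₁ φ)
      ≤ wSigmaL2 R₁ (invFourier (rhoLE ρ R₁) ⋆[ContinuousLinearMap.mul ℂ ℂ] PLE ρ R₂ φ) :=
        hρ.wSigmaL2_PLE_le_wSigmaL2_convolution hR₁0 hR₁₂ hφ hI R₁
    _ ≤ A * (wSigmaL2 R₂ (PLE ρ R₂ φ) +
          ENNReal.ofReal (R₁ ^ (-D)) * ∫⁻ x, ‖jap x ^ (-D)‖ₑ * ‖PLE ρ R₂ φ x‖ₑ) :=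
        hA R₁ R₂ hR₁ hR₂ _ (hρ.aestronglyMeasurable_PLE (hR₁0.trans_le hR₂) hφ)
    _ ≤ A * (1 * wSigmaL2 R₂ (PLE ρ R₂ φ) +
          ENNReal.ofReal (R₁ ^ (-D)) * (A' * ∫⁻ x, ‖jap x ^ (-D)‖ₑ * ‖φ x‖ₑ)) := by
        rw [one_mul]
        gcongr
        exact hA' R₂ (hR₁.trans hR₂) φ hφ
    _ ≤ (A + 1 : ℝ≥0) * ((A' + 1 : ℝ≥0) * wSigmaL2 R₂ (PLE ρ R₂ φ) +
          ENNReal.ofReal (R₁ ^ (-D)) *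
            ((A' + 1 : ℝ≥0) * ∫⁻ x, ‖jap x ^ (-D)‖ₑ * ‖φ x‖ₑ)) := by
        gcongr
        · exact le_self_add
        · exact_mod_cast le_add_self
        · exact le_self_add
    _ = (A + 1 : ℝ≥0) * (A' + 1 : ℝ≥0) * (wSigmaL2 R₂ (PLE ρ R₂ φ) +
          ENNReal.ofReal (R₁ ^ (-D)) * ∫⁻ x, ‖jap x ^ (-D)‖ₑ * ‖φ x‖ₑ) := by
        ring

/-- **Comparison of weighted frequency-truncated masses at different scales**
(Lemma 2.5, estimate (2.10)). -/
theorem PLE_weighted_L2_scales (ρ : ℝ → ℝ) (hρ : IsLPBump ρ) (D : ℝ) (hD : 1 ≤ D) :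
    ∃ C : ℝ, 0 < C ∧
      ∀ R₁ R₂ : ℝ, 16 ≤ R₁ → R₁ ≤ R₂ / 4 → (∃ k : ℕ, R₁ = 2 ^ k) → (∃ k : ℕ, R₂ = 2 ^ k) →
        ∀ φ : ℝ → ℂ, Measurable φ → Integrable (fun x => jap x ^ (-D) * ‖φ x‖) →
          wSigmaL2 R₁ (PLE ρ R₁ φ) ≤
            ENNReal.ofReal C *
              (wSigmaL2 R₂ (PLE ρ R₂ φ) +
                ENNReal.ofReal (R₁ ^ (-D)) * ENNReal.ofReal (wL1 D φ)) := by
  obtain ⟨C, hC, h⟩ := PLE_weighted_L2_scales_general ρ hρ D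
  exact ⟨C, hC, fun R₁ R₂ hR₁ hR₁₂ _ _ φ hφ =>
    h R₁ R₂ (by linarith) (by linarith) φ hφ.aestronglyMeasurable⟩
end
end

section
/- Brascamp–Lieb moment comparison (Lemma 3.5, estimate (3.1)). Let n ≥ 1, let V : ℝⁿ → ℝ be an even, convex function, and let A ∈ ℝ^{n×n} be a symmetric positive definite matrix. Define the probability measures μ and 𝒢 on ℝⁿ by dμ(φ) = Z₁^{-1} exp( -⟨φ, Aφ⟩ - V(φ) ) dφ and d𝒢(φ) = Z₂^{-1} exp( -⟨φ, Aφ⟩ ) dφ, where dφ is Lebesgue measure on ℝⁿ and Z₁, Z₂ are the normalization constants making μ and 𝒢 probability measures (these are finite and positive since an even convex V is bounded below by V(0)). Then for every linear function f : ℝⁿ → ℝ and every q ≥ 1: ∫ |f(φ)|^q dμ(φ) ≤ ∫ |f(φ)|^q d𝒢(φ). -/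
open MeasureTheory Real Matrix

noncomputable section

/-!
Write `⟨φ, Aφ⟩ = κ t² + Q z` in coordinates `φ = t w + z` with `t = f φ` and `z ∈ ker f`, where `w`
is `A`-orthogonal to `ker f`. By the Prékopa–Leindler inequality the fibre integrals
`M t = ∫ exp (-Q z - V (t w + z)) dz` of the even log-concave density are even and nonincreasing
in `|t|`. The measure `μ` changes the law of `t` under the Gaussian measure by a factor proportional
to `M`, whereas `|f φ| ^ q = |t| ^ q` is nondecreasing in `|t|`, so Chebyshev's correlation
inequality shows that this change can only decrease the moment.
-/

open scoped ENNReal NNReal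

section BrunnMinkowski

open scoped Pointwise

theorem volume_add_volume_le_volume_add_of_isCompact {K L : Set ℝ} (hK : IsCompact K)
    (hL : IsCompact L) (hK₀ : K.Nonempty) (hL₀ : L.Nonempty) :
    volume K + volume L ≤ volume (K + L) := by
  obtain ⟨p, hpK, hp⟩ := hK.exists_isGreatest hK₀
  obtain ⟨r, hrL, hr⟩ := hL.exists_isLeast hL₀
  -- The translates `K + r` and `p + L` of `K` and `L` meet only in the point `p + r`.
  have hdisj : AEDisjoint volume ((· + r) '' K) ((p + ·) '' L) := by
    refine measure_mono_null (t := {p + r}) ?_ (by simp)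
    rintro _ ⟨⟨x, hx, rfl⟩, y, hy, hxy⟩
    have hxp := hp hx
    have hry := hr hy
    simp only [Set.mem_singleton_iff] at hxy ⊢
    linarith
  calc volume K + volume L = volume ((· + r) '' K) + volume ((p + ·) '' L) := by
        simp [Set.image_add_right, Set.image_add_left]
    _ = volume ((· + r) '' K ∪ (p + ·) '' L) :=
        (measure_union₀ (hL.image (continuous_const_add p)).measurableSet.nullMeasurableSet
          hdisj).symm
    _ ≤ volume (K + L) := measure_mono <| Set.union_subset
        (Set.image_subset_iff.2 fun _ hx ↦ Set.add_mem_add hx hrL)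
        (Set.image_subset_iff.2 fun _ hy ↦ Set.add_mem_add hpK hy)

theorem volume_add_volume_le_volume_add {A B : Set ℝ} (hA : MeasurableSet A)
    (hB : MeasurableSet B) (hA₀ : A.Nonempty) (hB₀ : B.Nonempty) :
    volume A + volume B ≤ volume (A + B) := by
  obtain ⟨x₀, hx₀⟩ := hA₀
  obtain ⟨y₀, hy₀⟩ := hB₀
  simp only [hA.measure_eq_iSup_isCompact, hB.measure_eq_iSup_isCompact, iSup_and']
  refine ENNReal.biSup_add_biSup_le' ⟨∅, by simp⟩ ⟨∅, by simp⟩ fun K hK L hL ↦ ?_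
  calc volume K + volume L ≤ volume (insert x₀ K) + volume (insert y₀ L) := by
        gcongr <;> exact Set.subset_insert _ _
    _ ≤ volume (insert x₀ K + insert y₀ L) :=
        volume_add_volume_le_volume_add_of_isCompact (hK.2.insert _) (hL.2.insert _)
          (Set.insert_nonempty _ _) (Set.insert_nonempty _ _)
    _ ≤ volume (A + B) := measure_mono <|
        Set.add_subset_add (Set.insert_subset hx₀ hK.1) (Set.insert_subset hy₀ hL.1)

end BrunnMinkowski

section LevelSets

theorem lintegral_eq_lintegral_Ioi_measure_lt {X : Type*} [MeasurableSpace X] (μ : Measure X)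
    [SFinite μ] {f : X → ℝ≥0∞} (hf : Measurable f) :
    ∫⁻ x, f x ∂μ = ∫⁻ t in Set.Ioi (0 : ℝ), μ {x | ENNReal.ofReal t < f x} := by
  have hlength (y : ℝ≥0∞) : volume {t : ℝ | 0 < t ∧ ENNReal.ofReal t < y} = y := by
    induction y with
    | top => simpa [Set.Ioi] using Real.volume_Ioi (a := 0)
    | coe y =>
      have : {t : ℝ | 0 < t ∧ ENNReal.ofReal t < y} = Set.Ioo 0 (y : ℝ) := by
        ext t
        refine and_congr_right fun ht ↦ ?_
        rw [← ENNReal.ofReal_coe_nnreal, ENNReal.ofReal_lt_ofReal_iff']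
        exact ⟨And.left, fun h ↦ ⟨h, ht.trans h⟩⟩
      simp [this]
  have hS : MeasurableSet {p : X × ℝ | 0 < p.2 ∧ ENNReal.ofReal p.2 < f p.1} :=
    (measurableSet_lt measurable_const measurable_snd).inter
      (measurableSet_lt (ENNReal.measurable_ofReal.comp measurable_snd) (hf.comp measurable_fst))
  calc ∫⁻ x, f x ∂μ = ∫⁻ x, volume {t : ℝ | 0 < t ∧ ENNReal.ofReal t < f x} ∂μ := by
        simp only [hlength]
    _ = ∫⁻ t : ℝ, μ {x | 0 < t ∧ ENNReal.ofReal t < f x} :=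
        (Measure.prod_apply hS).symm.trans (Measure.prod_apply_symm hS)
    _ = ∫⁻ t in Set.Ioi (0 : ℝ), μ {x | ENNReal.ofReal t < f x} := by
        rw [← lintegral_indicator measurableSet_Ioi]
        refine lintegral_congr fun t ↦ ?_
        by_cases ht : 0 < t <;> simp [ht]

open scoped Pointwise in
theorem mul_lintegral_add_mul_lintegral_le {f g h : ℝ → ℝ≥0∞} (hf : Measurable f)
    (hg : Measurable g) (hh : Measurable h) (hfg : ⨆ x, f x = ⨆ y, g y) {a b : ℝ} (ha : 0 < a)
    (hb : 0 < b) (hfgh : ∀ x y, min (f x) (g y) ≤ h (a * x + b * y)) :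
    ENNReal.ofReal a * (∫⁻ x, f x) + ENNReal.ofReal b * (∫⁻ y, g y) ≤ ∫⁻ z, h z := by
  have hmeas (k : ℝ → ℝ≥0∞) : Measurable fun t : ℝ ↦ volume {x | ENNReal.ofReal t < k x} :=
    Antitone.measurable fun s t hst ↦ measure_mono fun x hx ↦
      (ENNReal.ofReal_le_ofReal hst).trans_lt hx
  have hlevel (t : ℝ) : ENNReal.ofReal a * volume {x | ENNReal.ofReal t < f x} +
      ENNReal.ofReal b * volume {y | ENNReal.ofReal t < g y} ≤
        volume {z | ENNReal.ofReal t < h z} := by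
    rcases lt_or_ge (ENNReal.ofReal t) (⨆ x, f x) with ht | ht
    · calc ENNReal.ofReal a * volume {x | ENNReal.ofReal t < f x} +
            ENNReal.ofReal b * volume {y | ENNReal.ofReal t < g y}
          = volume (a • {x | ENNReal.ofReal t < f x}) +
              volume (b • {y | ENNReal.ofReal t < g y}) := by
            simp [abs_of_pos, ha, hb]
        _ ≤ volume (a • {x | ENNReal.ofReal t < f x} + b • {y | ENNReal.ofReal t < g y}) :=
            volume_add_volume_le_volume_add
              ((measurableSet_lt measurable_const hf).const_smul_of_ne_zero ha.ne')
              ((measurableSet_lt measurable_const hg).const_smul_of_ne_zero hb.ne')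
              (Set.Nonempty.smul_set (lt_iSup_iff.1 ht))
              (Set.Nonempty.smul_set (lt_iSup_iff.1 (ht.trans_eq hfg)))
        _ ≤ volume {z | ENNReal.ofReal t < h z} := by
            refine measure_mono ?_
            rintro _ ⟨_, ⟨x, hx, rfl⟩, _, ⟨y, hy, rfl⟩, rfl⟩
            exact (lt_min hx hy).trans_le (hfgh x y)
    · have hf₀ (x : ℝ) : f x ≤ ENNReal.ofReal t := (le_iSup f x).trans ht
      have hg₀ (y : ℝ) : g y ≤ ENNReal.ofReal t := (le_iSup g y).trans (hfg ▸ ht)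
      simp [hf₀, hg₀, not_lt.2]
  rw [lintegral_eq_lintegral_Ioi_measure_lt volume hf,
    lintegral_eq_lintegral_Ioi_measure_lt volume hg,
    lintegral_eq_lintegral_Ioi_measure_lt volume hh, ← lintegral_const_mul _ (hmeas f),
    ← lintegral_const_mul _ (hmeas g), ← lintegral_add_left ((hmeas f).const_mul _)]
  exact lintegral_mono hlevel

end LevelSets

section WeightedMeans

theorem rpow_mul_rpow_of_add_eq_one (x : ℝ≥0∞) {a b : ℝ} (ha : 0 ≤ a) (hb : 0 ≤ b)
    (hab : a + b = 1) : x ^ a * x ^ b = x := by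
  rw [← ENNReal.rpow_add_of_nonneg a b ha hb, hab, ENNReal.rpow_one]

theorem min_le_rpow_mul_rpow (x y : ℝ≥0∞) {a b : ℝ} (ha : 0 ≤ a) (hb : 0 ≤ b)
    (hab : a + b = 1) : min x y ≤ x ^ a * y ^ b :=
  calc min x y = min x y ^ a * min x y ^ b := (rpow_mul_rpow_of_add_eq_one _ ha hb hab).symm
    _ ≤ x ^ a * y ^ b := by
        gcongr
        · exact min_le_left x y
        · exact min_le_right x y

theorem rpow_mul_rpow_le_weighted_add (x y : ℝ≥0∞) {a b : ℝ} (ha : 0 < a) (hb : 0 < b)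
    (hab : a + b = 1) :
    x ^ a * y ^ b ≤ ENNReal.ofReal a * x + ENNReal.ofReal b * y := by
  have hpq : a⁻¹.HolderConjugate b⁻¹ :=
    ⟨by simpa using hab, inv_pos.2 ha, inv_pos.2 hb⟩
  calc x ^ a * y ^ b ≤ (x ^ a) ^ a⁻¹ / ENNReal.ofReal a⁻¹ + (y ^ b) ^ b⁻¹ / ENNReal.ofReal b⁻¹ :=
        ENNReal.young_inequality _ _ hpq
    _ = ENNReal.ofReal a * x + ENNReal.ofReal b * y := by
        simp [ENNReal.div_eq_inv_mul, ENNReal.ofReal_inv_of_pos, ha, hb, ha.ne', hb.ne']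

end WeightedMeans

section PrekopaLeindler

/-- The Prékopa–Leindler inequality as a property of a measure on a real vector space. It is
stated for the lower integral, so that no integrability is required, and it passes to products
and linear images. -/
def IsPrekopaLeindler {E : Type*} [AddCommGroup E] [Module ℝ E] [MeasurableSpace E]
    (μ : Measure E) : Prop :=
  ∀ ⦃a b : ℝ⦄, 0 < a → 0 < b → a + b = 1 → ∀ ⦃f g h : E → ℝ≥0∞⦄,
    Measurable f → Measurable g → Measurable h →
    (∀ x y, f x ^ a * g y ^ b ≤ h (a • x + b • y)) →
    (∫⁻ x, f x ∂μ) ^ a * (∫⁻ y, g y ∂μ) ^ b ≤ ∫⁻ z, h z ∂μ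

section Real

variable {f g h : ℝ → ℝ≥0∞} {a b : ℝ}

theorem lintegral_rpow_mul_lintegral_rpow_le_of_iSup_eq (hf : Measurable f) (hg : Measurable g)
    (hh : Measurable h) (hfg : ⨆ x, f x = ⨆ y, g y) (ha : 0 < a) (hb : 0 < b) (hab : a + b = 1)
    (hfgh : ∀ x y, f x ^ a * g y ^ b ≤ h (a * x + b * y)) :
    (∫⁻ x, f x) ^ a * (∫⁻ y, g y) ^ b ≤ ∫⁻ z, h z :=
  (rpow_mul_rpow_le_weighted_add _ _ ha hb hab).trans <|
    mul_lintegral_add_mul_lintegral_le hf hg hh hfg ha hb fun x y ↦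
      (min_le_rpow_mul_rpow _ _ ha.le hb.le hab).trans (hfgh x y)

theorem lintegral_rpow_mul_lintegral_rpow_le_of_iSup_ne_top (hf : Measurable f)
    (hg : Measurable g) (hh : Measurable h) (hf_top : ⨆ x, f x ≠ ∞) (hg_top : ⨆ y, g y ≠ ∞)
    (ha : 0 < a) (hb : 0 < b) (hab : a + b = 1)
    (hfgh : ∀ x y, f x ^ a * g y ^ b ≤ h (a * x + b * y)) :
    (∫⁻ x, f x) ^ a * (∫⁻ y, g y) ^ b ≤ ∫⁻ z, h z := by
  set M := ⨆ x, f x with hM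
  set N := ⨆ y, g y with hN
  rcases eq_or_ne M 0 with hM₀ | hM₀
  · have hf₀ : f = 0 := funext <| by simpa [hM] using hM₀
    simp [hf₀, ha]
  rcases eq_or_ne N 0 with hN₀ | hN₀
  · have hg₀ : g = 0 := funext <| by simpa [hN] using hN₀
    simp [hg₀, hb]
  -- The inequality is homogeneous, so both suprema may be normalised to `1`.
  set c := M⁻¹ ^ a * N⁻¹ ^ b
  have hmul (x y : ℝ≥0∞) : (M⁻¹ * x) ^ a * (N⁻¹ * y) ^ b = c * (x ^ a * y ^ b) := by
    rw [ENNReal.mul_rpow_of_nonneg _ _ ha.le, ENNReal.mul_rpow_of_nonneg _ _ hb.le,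
      mul_mul_mul_comm]
  have hc₀ : c ≠ 0 := by simp [c, ha, hb, ha.le, hb.le, hf_top, hg_top]
  have hc_top : c ≠ ∞ := by
    refine ENNReal.mul_ne_top ?_ ?_ <;> refine ENNReal.rpow_ne_top_of_nonneg ?_ ?_ <;>
      simp [ha.le, hb.le, hM₀, hN₀]
  refine (ENNReal.mul_le_mul_iff_right hc₀ hc_top).1 ?_
  rw [← hmul, ← lintegral_const_mul _ hf, ← lintegral_const_mul _ hg, ← lintegral_const_mul _ hh]
  refine lintegral_rpow_mul_lintegral_rpow_le_of_iSup_eq (hf.const_mul _) (hg.const_mul _)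
    (hh.const_mul _) ?_ ha hb hab fun x y ↦ ?_
  · rw [← ENNReal.mul_iSup, ← ENNReal.mul_iSup, ← hM, ← hN, ENNReal.inv_mul_cancel hM₀ hf_top,
      ENNReal.inv_mul_cancel hN₀ hg_top]
  · rw [hmul]
    gcongr
    exact hfgh x y

theorem isPrekopaLeindler_volume_real : IsPrekopaLeindler (volume : Measure ℝ) := by
  intro a b ha hb hab f g h hf hg hh hfgh
  have htrunc {k : ℝ → ℝ≥0∞} (hk : Measurable k) :
      ∫⁻ x, k x = ⨆ n : ℕ, ∫⁻ x, min (k x) n := by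
    rw [← lintegral_iSup (fun n ↦ hk.min measurable_const)
      fun m n hmn x ↦ min_le_min_left _ (Nat.cast_le.2 hmn)]
    simp [← inf_iSup_eq, ENNReal.iSup_natCast]
  have hrpow {c : ℝ} (hc : 0 < c) (u : ℕ → ℝ≥0∞) : (⨆ n, u n) ^ c = ⨆ n, u n ^ c :=
    (ENNReal.orderIsoRpow c hc).map_iSup u
  have hbdd (k : ℝ → ℝ≥0∞) (n : ℕ) : ⨆ x, min (k x) n ≠ ∞ :=
    ((iSup_le fun x ↦ min_le_right _ _).trans_lt (ENNReal.natCast_lt_top n)).ne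
  rw [htrunc hf, htrunc hg, hrpow ha, hrpow hb, ENNReal.iSup_mul]
  refine iSup_le fun m ↦ ?_
  rw [ENNReal.mul_iSup]
  refine iSup_le fun n ↦ ?_
  refine lintegral_rpow_mul_lintegral_rpow_le_of_iSup_ne_top (hf.min measurable_const)
    (hg.min measurable_const) hh (hbdd f m) (hbdd g n) ha hb hab fun x y ↦ ?_
  refine le_trans ?_ (hfgh x y)
  gcongr <;> exact min_le_left _ _

end Real

namespace IsPrekopaLeindler

variable {E F : Type*} [AddCommGroup E] [Module ℝ E] [MeasurableSpace E] [AddCommGroup F]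
  [Module ℝ F] [MeasurableSpace F] {μ : Measure E} {ν : Measure F}

theorem of_subsingleton [Subsingleton E] (μ : Measure E) : IsPrekopaLeindler μ := by
  intro a b ha hb hab f g h _ _ _ hfgh
  have hconst (k : E → ℝ≥0∞) : ∫⁻ x, k x ∂μ = k 0 * μ Set.univ := by
    rw [lintegral_congr fun x ↦ congrArg k (Subsingleton.elim x 0), lintegral_const]
  rw [hconst, hconst, hconst, ENNReal.mul_rpow_of_nonneg _ _ ha.le,
    ENNReal.mul_rpow_of_nonneg _ _ hb.le, mul_mul_mul_comm,
    rpow_mul_rpow_of_add_eq_one _ ha.le hb.le hab]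
  gcongr
  simpa using hfgh 0 0

theorem prod [SFinite ν] (hμ : IsPrekopaLeindler μ) (hν : IsPrekopaLeindler ν) :
    IsPrekopaLeindler (μ.prod ν) := by
  intro a b ha hb hab f g h hf hg hh hfgh
  rw [lintegral_prod _ hf.aemeasurable, lintegral_prod _ hg.aemeasurable,
    lintegral_prod _ hh.aemeasurable]
  refine hμ ha hb hab hf.lintegral_prod_right' hg.lintegral_prod_right' hh.lintegral_prod_right'
    fun x y ↦ ?_
  exact hν ha hb hab (hf.comp measurable_prodMk_left) (hg.comp measurable_prodMk_left)
    (hh.comp measurable_prodMk_left) fun z w ↦ hfgh (x, z) (y, w)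

theorem map (hμ : IsPrekopaLeindler μ) {L : E →ₗ[ℝ] F} (hL : Measurable L) :
    IsPrekopaLeindler (μ.map L) := by
  intro a b ha hb hab f g h hf hg hh hfgh
  rw [lintegral_map hf hL, lintegral_map hg hL, lintegral_map hh hL]
  exact hμ ha hb hab (hf.comp hL) (hg.comp hL) (hh.comp hL) fun x y ↦ by
    simpa using hfgh (L x) (L y)

theorem smul (hμ : IsPrekopaLeindler μ) (c : ℝ≥0) : IsPrekopaLeindler (c • μ) := by
  intro a b ha hb hab f g h hf hg hh hfgh
  simp only [lintegral_smul_measure, ENNReal.smul_def, smul_eq_mul]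
  rw [ENNReal.mul_rpow_of_nonneg _ _ ha.le, ENNReal.mul_rpow_of_nonneg _ _ hb.le,
    mul_mul_mul_comm, rpow_mul_rpow_of_add_eq_one _ ha.le hb.le hab]
  gcongr
  exact hμ ha hb hab hf hg hh hfgh

end IsPrekopaLeindler

theorem isPrekopaLeindler_volume_pi : ∀ n : ℕ, IsPrekopaLeindler (volume : Measure (Fin n → ℝ))
  | 0 => .of_subsingleton volume
  | n + 1 => by
    have hcons := (volume_preserving_piFinSuccAbove (fun _ : Fin (n + 1) ↦ ℝ) 0).symm
    have heq : ⇑(MeasurableEquiv.piFinSuccAbove (fun _ : Fin (n + 1) ↦ ℝ) 0).symm =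
        (Fin.consLinearEquiv ℝ fun _ : Fin (n + 1) ↦ ℝ : _ →ₗ[ℝ] (Fin (n + 1) → ℝ)) := by
      ext p i
      simp [MeasurableEquiv.piFinSuccAbove, Fin.insertNthEquiv]
    have hmeas := hcons.measurable
    rw [heq] at hmeas hcons
    rw [← hcons.map_eq]
    exact (isPrekopaLeindler_volume_real.prod (isPrekopaLeindler_volume_pi n)).map hmeas

end PrekopaLeindler

section Haar

variable {E G : Type*} [NormedAddCommGroup E] [NormedSpace ℝ E] [FiniteDimensional ℝ E]
  [MeasurableSpace E] [BorelSpace E] [NormedAddCommGroup G] [NormedSpace ℝ G]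
  [MeasurableSpace G] [BorelSpace G]

theorem exists_eq_smul_map (μ : Measure E) [μ.IsAddHaarMeasure] (ν : Measure G)
    [ν.IsAddHaarMeasure] (e : G ≃L[ℝ] E) : ∃ c : ℝ≥0, c ≠ 0 ∧ μ = c • ν.map e := by
  have := e.isAddHaarMeasure_map ν
  exact ⟨μ.addHaarScalarFactor (ν.map e),
    (μ.addHaarScalarFactor_pos_of_isAddHaarMeasure (ν.map e)).ne',
    μ.isAddLeftInvariant_eq_smul (ν.map e)⟩

theorem isPrekopaLeindler_of_isAddHaarMeasure (μ : Measure E) [μ.IsAddHaarMeasure] :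
    IsPrekopaLeindler μ := by
  let e : (Fin (Module.finrank ℝ E) → ℝ) ≃L[ℝ] E := ContinuousLinearEquiv.ofFinrankEq (by simp)
  obtain ⟨c, -, hμ⟩ := exists_eq_smul_map μ volume e
  rw [hμ]
  exact ((isPrekopaLeindler_volume_pi _).map (L := e.toLinearMap) e.continuous.measurable).smul c

end Haar

section Marginal

variable {E F : Type*} [AddCommGroup E] [Module ℝ E] [MeasurableSpace E] [AddCommGroup F]
  [Module ℝ F] [MeasurableSpace F] [MeasurableNeg F] {ν : Measure F} [ν.IsNegInvariant]
  {W : E × F → ℝ}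

theorem ofReal_exp_rpow (x c : ℝ) :
    ENNReal.ofReal (exp x) ^ c = ENNReal.ofReal (exp (c * x)) := by
  rw [ENNReal.ofReal_rpow_of_pos (exp_pos x), ← exp_mul, mul_comm]

theorem lintegral_exp_neg_le_of_mem_segment (hν : IsPrekopaLeindler ν)
    (hconv : ConvexOn ℝ Set.univ W) (heven : ∀ p, W (-p) = W p) (hW : Measurable W) {s t : E}
    (hst : s ∈ segment ℝ (-t) t) :
    ∫⁻ z, ENNReal.ofReal (exp (-W (t, z))) ∂ν ≤ ∫⁻ z, ENNReal.ofReal (exp (-W (s, z))) ∂ν := by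
  set G : E → ℝ≥0∞ := fun r ↦ ∫⁻ z, ENNReal.ofReal (exp (-W (r, z))) ∂ν
  have hmeas (r : E) : Measurable fun z ↦ ENNReal.ofReal (exp (-W (r, z))) := by fun_prop
  have hG_neg (r : E) : G (-r) = G r := by
    simp only [G]
    rw [← lintegral_neg_eq_self]
    simp [← Prod.neg_mk, heven]
  change G t ≤ G s
  obtain ⟨a, b, ha, hb, hab, rfl⟩ := hst
  rcases ha.eq_or_lt with rfl | ha
  · simp [show b = 1 by linarith]
  rcases hb.eq_or_lt with rfl | hb
  · simp [show a = 1 by linarith, hG_neg]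
  calc G t = G (-t) ^ a * G t ^ b := by
        rw [hG_neg, rpow_mul_rpow_of_add_eq_one _ ha.le hb.le hab]
    _ ≤ G (a • -t + b • t) := hν ha hb hab (hmeas _) (hmeas _) (hmeas _) fun x y ↦ ?_
  rw [ofReal_exp_rpow, ofReal_exp_rpow, ← ENNReal.ofReal_mul (exp_nonneg _), ← exp_add]
  gcongr
  have := hconv.2 (Set.mem_univ (-t, x)) (Set.mem_univ (t, y)) ha.le hb.le hab
  simp only [Prod.smul_mk, Prod.mk_add_mk, smul_eq_mul] at this
  linarith

end Marginal

section Correlation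

theorem integral_mul_mul_integral_le_of_antivary {X : Type*} [MeasurableSpace X] {μ : Measure X}
    [SFinite μ] {φ ψ g : X → ℝ} (hφψ : Antivary φ ψ) (hg₀ : ∀ x, 0 ≤ g x) (hg : Integrable g μ)
    (hφg : Integrable (fun x ↦ φ x * g x) μ) (hψg : Integrable (fun x ↦ ψ x * g x) μ)
    (hφψg : Integrable (fun x ↦ φ x * (ψ x * g x)) μ) :
    (∫ x, φ x * (ψ x * g x) ∂μ) * ∫ x, g x ∂μ ≤
      (∫ x, φ x * g x ∂μ) * ∫ x, ψ x * g x ∂μ := by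
  have hpos₁ : Integrable (fun p : X × X ↦ φ p.1 * (ψ p.1 * g p.1) * g p.2) (μ.prod μ) :=
    hφψg.mul_prod hg
  have hpos₂ : Integrable (fun p : X × X ↦ g p.1 * (φ p.2 * (ψ p.2 * g p.2))) (μ.prod μ) :=
    hg.mul_prod hφψg
  have hneg₁ : Integrable (fun p : X × X ↦ φ p.1 * g p.1 * (ψ p.2 * g p.2)) (μ.prod μ) :=
    hφg.mul_prod hψg
  have hneg₂ : Integrable (fun p : X × X ↦ ψ p.1 * g p.1 * (φ p.2 * g p.2)) (μ.prod μ) :=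
    hψg.mul_prod hφg
  have hexpand : ∫ p : X × X, (φ p.1 - φ p.2) * (ψ p.1 - ψ p.2) * (g p.1 * g p.2) ∂μ.prod μ =
      2 * ((∫ x, φ x * (ψ x * g x) ∂μ) * ∫ x, g x ∂μ) -
        2 * ((∫ x, φ x * g x ∂μ) * ∫ x, ψ x * g x ∂μ) := by
    calc
      _ = ∫ p : X × X, (φ p.1 * (ψ p.1 * g p.1) * g p.2 + g p.1 * (φ p.2 * (ψ p.2 * g p.2))) -
            (φ p.1 * g p.1 * (ψ p.2 * g p.2) + ψ p.1 * g p.1 * (φ p.2 * g p.2)) ∂μ.prod μ := by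
          congr with p
          ring
      _ = _ := by
          rw [integral_sub (by fun_prop) (by fun_prop), integral_add hpos₁ hpos₂,
            integral_add hneg₁ hneg₂, integral_prod_mul (fun x ↦ φ x * (ψ x * g x)) g,
            integral_prod_mul g fun x ↦ φ x * (ψ x * g x),
            integral_prod_mul (fun x ↦ φ x * g x) fun x ↦ ψ x * g x,
            integral_prod_mul (fun x ↦ ψ x * g x) fun x ↦ φ x * g x]
          ring
  have hnonpos : ∫ p : X × X, (φ p.1 - φ p.2) * (ψ p.1 - ψ p.2) * (g p.1 * g p.2) ∂μ.prod μ ≤ 0 :=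
    integral_nonpos fun p ↦ mul_nonpos_of_nonpos_of_nonneg
      (by simpa using hφψ.sub_mul_sub_nonpos p.2 p.1) (mul_nonneg (hg₀ _) (hg₀ _))
  linarith

theorem mem_segment_neg_self_of_abs_le {𝕜 : Type*} [Field 𝕜] [LinearOrder 𝕜]
    [IsStrictOrderedRing 𝕜] {s t : 𝕜} (hst : |s| ≤ |t|) :
    s ∈ segment 𝕜 (-t) t := by
  rw [segment_eq_uIcc, Set.mem_uIcc]
  grind

section Product

variable {F : Type*} [NormedAddCommGroup F] [NormedSpace ℝ F] [FiniteDimensional ℝ F]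
  [MeasurableSpace F] [BorelSpace F] {ν : Measure F} [ν.IsNegInvariant]

theorem integral_exp_neg_le_of_abs_le (hν : IsPrekopaLeindler ν) {W : ℝ × F → ℝ}
    (hW : ConvexOn ℝ Set.univ W) (heven : ∀ p, W (-p) = W p) {s t : ℝ} (hst : |s| ≤ |t|)
    (hs : Integrable (fun z ↦ exp (-W (s, z))) ν) :
    ∫ z, exp (-W (t, z)) ∂ν ≤ ∫ z, exp (-W (s, z)) ∂ν := by
  have hWc : Continuous W := hW.locallyLipschitz.continuous
  have hint (r : ℝ) : ∫ z, exp (-W (r, z)) ∂ν =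
      (∫⁻ z, ENNReal.ofReal (exp (-W (r, z))) ∂ν).toReal :=
    integral_eq_lintegral_of_nonneg_ae (.of_forall fun _ ↦ exp_nonneg _)
      (by fun_prop : Continuous fun z ↦ exp (-W (r, z))).aestronglyMeasurable
  rw [hint, hint]
  exact ENNReal.toReal_mono hs.lintegral_lt_top.ne <| lintegral_exp_neg_le_of_mem_segment hν hW
    heven hWc.measurable (mem_segment_neg_self_of_abs_le hst)

theorem integral_mul_exp_neg_mul_integral_le [SFinite ν] (hν : IsPrekopaLeindler ν)
    {σ : Measure ℝ} [SFinite σ] {Φ : ℝ → ℝ} (hΦ : MonotoneOn Φ (Set.Ici 0)) {g : ℝ → ℝ}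
    (hg₀ : ∀ t, 0 ≤ g t) {W : ℝ × F → ℝ} (hW : ConvexOn ℝ Set.univ W)
    (heven : ∀ p, W (-p) = W p) (hslice : ∀ t, Integrable (fun z ↦ exp (-W (t, z))) ν)
    (hg : Integrable g σ) (hΦg : Integrable (fun t ↦ Φ |t| * g t) σ)
    (hgW : Integrable (fun p : ℝ × F ↦ g p.1 * exp (-W p)) (σ.prod ν))
    (hΦgW : Integrable (fun p : ℝ × F ↦ Φ |p.1| * (g p.1 * exp (-W p))) (σ.prod ν)) :
    (∫ p : ℝ × F, Φ |p.1| * (g p.1 * exp (-W p)) ∂σ.prod ν) * ∫ t, g t ∂σ ≤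
      (∫ t, Φ |t| * g t ∂σ) * ∫ p : ℝ × F, g p.1 * exp (-W p) ∂σ.prod ν := by
  have hanti : Antivary (fun t : ℝ ↦ Φ |t|) fun t ↦ ∫ z, exp (-W (t, z)) ∂ν := fun s t hst ↦
    hΦ (abs_nonneg t) (abs_nonneg s) <| le_of_not_ge fun h ↦
      hst.not_ge (integral_exp_neg_le_of_abs_le hν hW heven h (hslice s))
  have hψg := hgW.integral_prod_left
  have hΦψg := hΦgW.integral_prod_left
  rw [integral_prod _ hgW, integral_prod _ hΦgW]
  simp only [integral_const_mul] at hψg hΦψg ⊢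
  simpa only [mul_comm (g _)] using integral_mul_mul_integral_le_of_antivary hanti hg₀ hg hΦg
    (by simpa only [mul_comm (g _)] using hψg) (by simpa only [mul_comm (g _)] using hΦψg)

end Product

end Correlation

section EvenConvexPotential

theorem apply_zero_le_of_convexOn_of_even {E : Type*} [AddCommGroup E] [Module ℝ E] {V : E → ℝ}
    (hV : ConvexOn ℝ Set.univ V) (heven : ∀ x, V (-x) = V x) (x : E) : V 0 ≤ V x := by
  have := hV.2 (Set.mem_univ x) (Set.mem_univ (-x)) (by norm_num : (0 : ℝ) ≤ 1 / 2)
    (by norm_num : (0 : ℝ) ≤ 1 / 2) (by norm_num)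
  simp only [smul_neg, add_neg_cancel, heven, smul_eq_mul] at this
  linarith

theorem integrable_mul_exp_neg_of_le {X : Type*} [TopologicalSpace X] [MeasurableSpace X]
    [OpensMeasurableSpace X] {μ : Measure X} {u V : X → ℝ} {m : ℝ} (hu : Integrable u μ)
    (hV : Continuous V) (hm : ∀ x, m ≤ V x) : Integrable (fun x ↦ u x * exp (-V x)) μ :=
  hu.mul_bdd (c := exp (-m)) (by fun_prop : Continuous fun x ↦ exp (-V x)).aestronglyMeasurable <|
    .of_forall fun x ↦ by simpa using hm x

end EvenConvexPotential

section ProductDensity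

variable {F : Type*} [NormedAddCommGroup F] [NormedSpace ℝ F] [FiniteDimensional ℝ F]
  [MeasurableSpace F] [BorelSpace F] {ν : Measure F} [ν.IsNegInvariant] [SFinite ν]

theorem integral_mul_exp_neg_mul_integral_prod_le (hν : IsPrekopaLeindler ν) {σ : Measure ℝ}
    [SFinite σ] {Φ : ℝ → ℝ} (hΦ : MonotoneOn Φ (Set.Ici 0)) {g : ℝ → ℝ} (hg₀ : ∀ t, 0 ≤ g t)
    {Q : F → ℝ} (hQ : ConvexOn ℝ Set.univ Q) (hQ_even : ∀ z, Q (-z) = Q z) {V : ℝ × F → ℝ}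
    (hV : ConvexOn ℝ Set.univ V) (hV_even : ∀ p, V (-p) = V p) (hg : Integrable g σ)
    (hΦg : Integrable (fun t ↦ Φ |t| * g t) σ) (hQ_int : Integrable (fun z ↦ exp (-Q z)) ν) :
    (∫ p : ℝ × F, Φ |p.1| * (g p.1 * exp (-Q p.2) * exp (-V p)) ∂σ.prod ν) *
        ∫ p : ℝ × F, g p.1 * exp (-Q p.2) ∂σ.prod ν ≤
      (∫ p : ℝ × F, Φ |p.1| * (g p.1 * exp (-Q p.2)) ∂σ.prod ν) *
        ∫ p : ℝ × F, g p.1 * exp (-Q p.2) * exp (-V p) ∂σ.prod ν := by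
  have hVc : Continuous V := hV.locallyLipschitz.continuous
  have hV₀ := apply_zero_le_of_convexOn_of_even hV hV_even
  have hexp (p : ℝ × F) : exp (-(Q p.2 + V p)) = exp (-Q p.2) * exp (-V p) := by
    rw [neg_add, exp_add]
  have hW : ConvexOn ℝ Set.univ fun p : ℝ × F ↦ Q p.2 + V p :=
    (hQ.comp_linearMap (LinearMap.snd ℝ ℝ F)).add hV
  have hslice (t : ℝ) : Integrable (fun z ↦ exp (-(Q z + V (t, z)))) ν := by
    simpa only [hexp (t, _)] using
      integrable_mul_exp_neg_of_le hQ_int (by fun_prop) fun z ↦ hV₀ (t, z)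
  have hgW := integrable_mul_exp_neg_of_le (hg.mul_prod hQ_int) hVc hV₀
  have hΦgW := integrable_mul_exp_neg_of_le (hΦg.mul_prod hQ_int) hVc hV₀
  have hmain := integral_mul_exp_neg_mul_integral_le hν hΦ hg₀ hW
    (fun p ↦ by simp [hQ_even, hV_even]) hslice hg hΦg
    (by simpa only [hexp, ← mul_assoc] using hgW) (by simpa only [hexp, ← mul_assoc] using hΦgW)
  simp only [hexp, ← mul_assoc] at hmain ⊢
  rw [integral_prod_mul g fun z ↦ exp (-Q z),
    integral_prod_mul (fun t ↦ Φ |t| * g t) fun z ↦ exp (-Q z), ← mul_assoc,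
    mul_right_comm _ (∫ z, exp (-Q z) ∂ν)]
  exact mul_le_mul_of_nonneg_right hmain (integral_nonneg fun z ↦ exp_nonneg _)

end ProductDensity

section QuadraticForm

section Algebraic

variable {E : Type*} [AddCommGroup E] [Module ℝ E] {Q : QuadraticForm ℝ E}

theorem convexOn_quadraticForm (hQ : ∀ x, 0 ≤ Q x) : ConvexOn ℝ Set.univ Q := by
  refine ⟨convex_univ, fun x _ y _ a b ha hb hab ↦ ?_⟩
  have hsub : Q (x - y) = Q x + Q y - QuadraticMap.polar Q x y := by
    rw [sub_eq_add_neg, QuadraticMap.map_add Q, QuadraticMap.map_neg,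
      QuadraticMap.polar_neg_right]
    ring
  have hgap : a * Q x + b * Q y - Q (a • x + b • y) = a * b * Q (x - y) := by
    obtain rfl : b = 1 - a := by linarith
    rw [hsub, QuadraticMap.map_add Q, QuadraticMap.map_smul, QuadraticMap.map_smul,
      QuadraticMap.polar_smul_left, QuadraticMap.polar_smul_right]
    simp only [smul_eq_mul]
    ring
  have := mul_nonneg (mul_nonneg ha hb) (hQ (x - y))
  simp only [smul_eq_mul]
  linarith

theorem exists_forall_polar_eq_zero [FiniteDimensional ℝ E] (hQ : Q.PosDef) {f : E →ₗ[ℝ] ℝ}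
    (hf : f ≠ 0) : ∃ w, f w = 1 ∧ ∀ z, f z = 0 → QuadraticMap.polar Q w z = 0 := by
  have hinj : Function.Injective Q.polarBilin := by
    refine (injective_iff_map_eq_zero _).2 fun w hw ↦ ?_
    have hself : Q.polarBilin w w = 0 := by rw [hw, LinearMap.zero_apply]
    simpa [QuadraticMap.polar_self, hQ.anisotropic.eq_zero_iff] using hself
  obtain ⟨v, hv⟩ := (LinearMap.injective_iff_surjective_of_finrank_eq_finrank
    (Subspace.dual_finrank_eq (K := ℝ) (V := E)).symm).1 hinj f
  have hv' (z : E) : QuadraticMap.polar Q v z = f z := LinearMap.congr_fun hv z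
  have hfv : f v ≠ 0 := by
    intro hfv
    rw [← hv', QuadraticMap.polar_self, two_smul] at hfv
    have hv₀ : v = 0 := hQ.anisotropic v (by linarith)
    exact hf (by rw [← hv, hv₀, map_zero])
  refine ⟨(f v)⁻¹ • v, by simp [hfv], fun z hz ↦ ?_⟩
  simp [QuadraticMap.polar_smul_left, hv', hz]

end Algebraic

variable {E : Type*} [NormedAddCommGroup E] [NormedSpace ℝ E] [FiniteDimensional ℝ E]
  {Q : QuadraticForm ℝ E}

theorem exists_pos_forall_mul_norm_sq_le (hQ : Q.PosDef) :
    ∃ c > 0, ∀ x, c * ‖x‖ ^ 2 ≤ Q x := by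
  rcases subsingleton_or_nontrivial E with _ | _
  · exact ⟨1, one_pos, fun x ↦ by simp [Subsingleton.elim x 0]⟩
  have hQc : Continuous Q := (convexOn_quadraticForm hQ.nonneg).locallyLipschitz.continuous
  obtain ⟨u, hu, hmin⟩ := (isCompact_sphere (0 : E) 1).exists_isMinOn
    (NormedSpace.sphere_nonempty.2 zero_le_one) hQc.continuousOn
  refine ⟨Q u, hQ u (ne_zero_of_mem_unit_sphere ⟨u, hu⟩), fun x ↦ ?_⟩
  rcases eq_or_ne x 0 with rfl | hx
  · simp
  have hx' : ‖x‖ ≠ 0 := norm_ne_zero_iff.2 hx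
  have hunit : Q u ≤ Q (‖x‖⁻¹ • x) := hmin (by simp [norm_smul, hx'])
  rw [QuadraticMap.map_smul, smul_eq_mul] at hunit
  calc Q u * ‖x‖ ^ 2 ≤ ‖x‖⁻¹ * ‖x‖⁻¹ * Q x * ‖x‖ ^ 2 := by gcongr
    _ = Q x := by field_simp

theorem exists_equiv_prod_ker (hQ : Q.PosDef) {f : E →L[ℝ] ℝ} (hf : f ≠ 0) :
    ∃ (e : (ℝ × f.ker) ≃L[ℝ] E) (κ : ℝ), 0 < κ ∧ (∀ p, f (e p) = p.1) ∧
      ∀ p, Q (e p) = κ * p.1 ^ 2 + Q (p.2 : E) := by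
  obtain ⟨w, hfw, hw⟩ := exists_forall_polar_eq_zero hQ (f := f.toLinearMap) fun h ↦
    hf (ContinuousLinearMap.coe_injective h)
  replace hfw : f w = 1 := hfw
  have hw₀ : w ≠ 0 := by rintro rfl; simp at hfw
  refine ⟨(ContinuousLinearEquiv.equivOfRightInverse f
    (ContinuousLinearMap.toSpanSingleton ℝ w) fun t ↦ by simp [hfw]).symm, Q w, hQ w hw₀,
    fun p ↦ ?_, fun p ↦ ?_⟩
  · have : f (p.2 : E) = 0 := p.2.2
    simp [hfw, this]
  · have hp : QuadraticMap.polar Q w p.2 = 0 := hw p.2 p.2.2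
    simp [QuadraticMap.map_add Q, QuadraticMap.map_smul, QuadraticMap.polar_smul_left, hp]
    ring

section Integrable

variable [MeasurableSpace E] [BorelSpace E] {μ : Measure E} [μ.IsAddHaarMeasure]

theorem integrable_norm_rpow_mul_exp_neg_mul_norm_sq {c : ℝ} (hc : 0 < c) {q : ℝ} (hq : 0 ≤ q) :
    Integrable (fun x ↦ ‖x‖ ^ q * exp (-(c * ‖x‖ ^ 2))) μ := by
  rcases subsingleton_or_nontrivial E with _ | _
  · exact .of_finite
  refine (integrable_fun_norm_addHaar μ (f := fun r ↦ r ^ q * exp (-(c * r ^ 2)))).2 ?_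
  have hs : -1 < ((Module.finrank ℝ E - 1 : ℕ) : ℝ) + q := neg_one_lt_zero.trans_le (by positivity)
  have hgauss := (integrable_rpow_mul_exp_neg_mul_sq hc hs).integrableOn (s := Set.Ioi 0)
  refine hgauss.congr_fun (fun r (hr : 0 < r) ↦ ?_) measurableSet_Ioi
  simp only [rpow_add hr, rpow_natCast, smul_eq_mul, neg_mul, mul_assoc]

theorem integrable_abs_rpow_mul_exp_neg_quadraticForm (hQ : Q.PosDef) (f : E →L[ℝ] ℝ) {q : ℝ}
    (hq : 0 ≤ q) : Integrable (fun x ↦ |f x| ^ q * exp (-Q x)) μ := by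
  obtain ⟨c, hc, hcQ⟩ := exists_pos_forall_mul_norm_sq_le hQ
  have hQc : Continuous Q := (convexOn_quadraticForm hQ.nonneg).locallyLipschitz.continuous
  have hfc : Continuous fun x ↦ |f x| ^ q := f.continuous.abs.rpow_const fun _ ↦ .inr hq
  refine ((integrable_norm_rpow_mul_exp_neg_mul_norm_sq hc hq).const_mul (‖f‖ ^ q)).mono'
    (hfc.mul (by fun_prop : Continuous fun x ↦ exp (-Q x))).aestronglyMeasurable <|
    .of_forall fun x ↦ ?_
  have hfx : |f x| ≤ ‖f‖ * ‖x‖ := f.le_opNorm x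
  calc ‖|f x| ^ q * exp (-Q x)‖ = |f x| ^ q * exp (-Q x) := norm_of_nonneg (by positivity)
    _ ≤ (‖f‖ * ‖x‖) ^ q * exp (-(c * ‖x‖ ^ 2)) := by
        gcongr
        exact hcQ x
    _ = ‖f‖ ^ q * (‖x‖ ^ q * exp (-(c * ‖x‖ ^ 2))) := by
        rw [mul_rpow (norm_nonneg _) (norm_nonneg _), mul_assoc]

theorem integrable_exp_neg_quadraticForm (hQ : Q.PosDef) : Integrable (fun x ↦ exp (-Q x)) μ := by
  simpa using integrable_abs_rpow_mul_exp_neg_quadraticForm hQ 0 le_rfl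

theorem integral_exp_neg_quadraticForm_pos (hQ : Q.PosDef) : 0 < ∫ x, exp (-Q x) ∂μ :=
  integral_exp_pos (integrable_exp_neg_quadraticForm hQ)

end Integrable

end QuadraticForm

section Comparison

theorem integrable_of_integrable_prod_mul {X Y : Type*} [MeasurableSpace X] [MeasurableSpace Y]
    {σ : Measure X} {ν : Measure Y} [SFinite ν] {u : X → ℝ} {v : Y → ℝ}
    (huv : Integrable (fun p : X × Y ↦ u p.1 * v p.2) (σ.prod ν)) (hv : ∫ y, v y ∂ν ≠ 0) :
    Integrable u σ := by
  have := huv.integral_prod_left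
  simp only [integral_const_mul] at this
  exact (integrable_mul_const_iff hv.isUnit u).1 this

variable {E : Type*} [NormedAddCommGroup E] [NormedSpace ℝ E] [FiniteDimensional ℝ E]
  [MeasurableSpace E] [BorelSpace E] {Q : QuadraticForm ℝ E} {V : E → ℝ} {Φ : ℝ → ℝ}

theorem integral_mul_exp_neg_sub_mul_integral_le (μ : Measure E) [μ.IsAddHaarMeasure]
    (hQ : Q.PosDef) (hV : ConvexOn ℝ Set.univ V) (hV_even : ∀ x, V (-x) = V x)
    (f : E →L[ℝ] ℝ) (hΦ : MonotoneOn Φ (Set.Ici 0))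
    (hint : Integrable (fun x ↦ Φ |f x| * exp (-Q x)) μ) :
    (∫ x, Φ |f x| * (exp (-Q x) * exp (-V x)) ∂μ) * ∫ x, exp (-Q x) ∂μ ≤
      (∫ x, Φ |f x| * exp (-Q x) ∂μ) * ∫ x, exp (-Q x) * exp (-V x) ∂μ := by
  rcases eq_or_ne f 0 with rfl | hf
  · simp only [_root_.zero_apply, integral_const_mul]
    exact (mul_right_comm ..).le
  obtain ⟨e, κ, hκ, hfe, hQe⟩ := exists_equiv_prod_ker hQ hf
  let ν : Measure f.ker := Measure.addHaar
  let R : QuadraticForm ℝ f.ker := Q.comp f.ker.subtype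
  have hR : R.PosDef := fun z hz ↦ hQ z (by simpa using hz)
  obtain ⟨c, hc, rfl⟩ := exists_eq_smul_map μ (volume.prod ν) e
  have hexp (p : ℝ × f.ker) : exp (-Q (e p)) = exp (-κ * p.1 ^ 2) * exp (-R p.2) := by
    rw [hQe, neg_add, exp_add, neg_mul]
    rfl
  have he := e.toHomeomorph.measurableEmbedding
  have hmap (u : E → ℝ) :
      ∫ x, u x ∂(c • (volume.prod ν).map e) = c * ∫ p, u (e p) ∂volume.prod ν := by
    rw [integral_smul_nnreal_measure, NNReal.smul_def, smul_eq_mul]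
    exact congrArg _ (he.integral_map u)
  have hint_prod : Integrable (fun p ↦ Φ |f (e p)| * exp (-Q (e p))) (volume.prod ν) :=
    he.integrable_map_iff.1 <|
      (integrable_smul_measure (c := (c : ℝ≥0∞)) (by simpa using hc) ENNReal.coe_ne_top).1 hint
  simp only [hfe, hexp, ← mul_assoc] at hint_prod
  have hmain := integral_mul_exp_neg_mul_integral_prod_le
    (isPrekopaLeindler_of_isAddHaarMeasure ν) (σ := volume) (V := fun p ↦ V (e p)) hΦ
    (fun t ↦ exp_nonneg (-κ * t ^ 2)) (convexOn_quadraticForm hR.nonneg) R.map_neg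
    (hV.comp_linearMap e.toLinearMap) (fun p ↦ by simp [hV_even]) (integrable_exp_neg_mul_sq hκ)
    (integrable_of_integrable_prod_mul hint_prod
      (integral_exp_neg_quadraticForm_pos (μ := ν) hR).ne')
    (integrable_exp_neg_quadraticForm hR)
  simp only [hmap, hfe, hexp]
  linear_combination (c : ℝ) ^ 2 * hmain

theorem brascamp_lieb_moment_general (μ : Measure E) [μ.IsAddHaarMeasure]
    (hQ : Q.PosDef) (hV : ConvexOn ℝ Set.univ V) (hV_even : ∀ x, V (-x) = V x)
    (f : E →L[ℝ] ℝ) (hΦ : MonotoneOn Φ (Set.Ici 0))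
    (hint : Integrable (fun x ↦ Φ |f x| * exp (-Q x)) μ) :
    (∫ x, Φ |f x| * exp (-Q x - V x) ∂μ) / (∫ x, exp (-Q x - V x) ∂μ) ≤
      (∫ x, Φ |f x| * exp (-Q x) ∂μ) / (∫ x, exp (-Q x) ∂μ) := by
  have hVc : Continuous V := hV.locallyLipschitz.continuous
  have hQV : Integrable (fun x ↦ exp (-Q x) * exp (-V x)) μ := integrable_mul_exp_neg_of_le
    (integrable_exp_neg_quadraticForm hQ) hVc (apply_zero_le_of_convexOn_of_even hV hV_even)
  simp only [sub_eq_add_neg, exp_add]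
  rw [div_le_div_iff₀ _ (integral_exp_neg_quadraticForm_pos hQ)]
  · exact integral_mul_exp_neg_sub_mul_integral_le μ hQ hV hV_even f hΦ hint
  · simp only [← exp_add] at hQV ⊢
    exact integral_exp_pos hQV

end Comparison

theorem toQuadraticForm'_apply_eq_dotProduct {ι R : Type*} [Fintype ι] [DecidableEq ι]
    [CommRing R] (A : Matrix ι ι R) (x : ι → R) :
    A.toQuadraticForm' x = x ⬝ᵥ A *ᵥ x := by
  simp [toQuadraticForm', toLinearMap₂'_apply']

/-- **Brascamp–Lieb moment comparison** (Lemma 3.5, estimate (3.1)). For an even convex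
potential `V` and a positive definite quadratic form `⟨φ, Aφ⟩`, the `q`-th moments of a linear
functional under the Gibbs measure `Z₁⁻¹ e^{-⟨φ,Aφ⟩ - V(φ)} dφ` are dominated by those under
the Gaussian measure `Z₂⁻¹ e^{-⟨φ,Aφ⟩} dφ`. -/
theorem brascamp_lieb_moment (n : ℕ) (hn : 1 ≤ n)
    (V : (Fin n → ℝ) → ℝ) (hVeven : ∀ x, V (-x) = V x) (hVconvex : ConvexOn ℝ Set.univ V)
    (A : Matrix (Fin n) (Fin n) ℝ) (hAsymm : A.IsSymm) (hApos : A.PosDef)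
    (f : (Fin n → ℝ) →ₗ[ℝ] ℝ) (q : ℝ) (hq : 1 ≤ q) :
    (∫ φ : Fin n → ℝ, |f φ| ^ q * Real.exp (-(φ ⬝ᵥ A.mulVec φ) - V φ)) /
        (∫ φ : Fin n → ℝ, Real.exp (-(φ ⬝ᵥ A.mulVec φ) - V φ)) ≤
      (∫ φ : Fin n → ℝ, |f φ| ^ q * Real.exp (-(φ ⬝ᵥ A.mulVec φ))) /
        (∫ φ : Fin n → ℝ, Real.exp (-(φ ⬝ᵥ A.mulVec φ))) := by
  have hq₀ : 0 ≤ q := zero_le_one.trans hq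
  simpa only [toQuadraticForm'_apply_eq_dotProduct, LinearMap.coe_toContinuousLinearMap'] using
    brascamp_lieb_moment_general volume hApos.toQuadraticForm' hVconvex hVeven
      f.toContinuousLinearMap (monotoneOn_rpow_Ici_of_exponent_nonneg hq₀)
      (integrable_abs_rpow_mul_exp_neg_quadraticForm hApos.toQuadraticForm' _ hq₀)
end
end
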